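/- arXiv:2508.21656 — 2 statements merged into one kernel-verified Lean document; each statement's English description precedes it below -/
import Mathlib

section
/- Let τ > 0 and let (aⱼ)_{j∈ℕ} and (bⱼ)_{j∈ℕ} be real sequences with Σ_j (aⱼ − bⱼ)² < ∞ (i.e. a − b ∈ ℓ²). Let P be the countable product probability measure on ℝ^ℕ whose j-th factor is the Gaussian distribution N(aⱼ, τ²), and let Q be the corresponding product measure with means bⱼ. Then the total variation distance satisfies V(P,Q) = 1 − 2Φ(−‖a−b‖_{ℓ²}/(2τ)), where ‖a−b‖_{ℓ²} = (Σ_j (aⱼ−bⱼ)²)^{1/2}. -/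
/-!
The result reduces to finitely many coordinates: half-spaces depending on finitely many coordinates
already nearly attain the supremum, and cylinders approximate every event.

For finitely many coordinates, `⨂ N(aᵢ, v)` has density `exp ∘ logLik` with respect to
`⨂ N(bᵢ, v)`, so the difference of the two measures is maximal on `{0 ≤ logLik}`
(`neyman_pearson`). Since `logLik` is affine, it has law `N(D/2, D)` under the first product and
`N(-D/2, D)` under the second, where `D = ∑ (aᵢ - bᵢ)² / v` (`map_logLik`); hence the maximum is
`1 - 2Φ(-√D/2)` (`pi_gaussian_logLik`, `pi_gaussian_le`).

On `ℝ^ℕ`, this value is increasing in the set of coordinates, and cylinders are dense among the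
events for `P + Q` (`abs_sub_le_of_cylinders`), which gives the upper bound. For the lower bound,
the half-spaces `{0 ≤ logLik}` over finite sets `s` of coordinates are used; the partial sums over
`s` converge to the full sum and `Φ` is right-continuous. No density of `P` with respect to `Q` is
needed.
-/

open MeasureTheory

noncomputable section

/-- The standard Gaussian cumulative distribution function Φ. -/
def Phi (u : ℝ) : ℝ := ((ProbabilityTheory.gaussianReal 0 1) (Set.Iic u)).toReal

/-- The total variation distance `V(P,Q) = sup_A |P(A) − Q(A)|`. -/
def tvDist {α : Type*} [MeasurableSpace α] (P Q : MeasureTheory.Measure α) : ℝ :=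
  ⨆ A : {A : Set α // MeasurableSet A}, |(P A.1).toReal - (Q A.1).toReal|

end

open ProbabilityTheory Set Filter Topology
open scoped ENNReal NNReal symmDiff

/-! ### One-dimensional Gaussian laws -/

lemma Phi_neg (u : ℝ) : Phi (-u) = 1 - Phi u := by
  have : NullSingletonClass (gaussianReal 0 1) := nullSingletonClass_gaussianReal one_ne_zero
  have h : (gaussianReal 0 1).map (fun x ↦ -x) = gaussianReal 0 1 := by
    simpa using gaussianReal_map_neg (μ := 0) (v := 1)
  have h1 : (gaussianReal 0 1) (Iic (-u)) = (gaussianReal 0 1) (Iic u)ᶜ := by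
    conv_lhs => rw [← h, Measure.map_apply measurable_neg measurableSet_Iic]
    have : (fun x : ℝ ↦ -x) ⁻¹' Iic (-u) = Ici u := by ext x; simp
    rw [this, compl_Iic, measure_congr Ioi_ae_eq_Ici]
  unfold Phi
  rw [h1, prob_compl_eq_one_sub measurableSet_Iic,
    ENNReal.toReal_sub_of_le prob_le_one ENNReal.one_ne_top, ENNReal.toReal_one]

lemma Phi_eq_cdf (u : ℝ) : Phi u = cdf (gaussianReal 0 1) u :=
  (cdf_eq_real _ u).symm

lemma Phi_mono : Monotone Phi := fun x y h ↦ by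
  simpa only [Phi_eq_cdf] using monotone_cdf _ h

lemma gaussian_Ici_zero (m : ℝ) {σ : ℝ} (hσ : 0 < σ) :
    ((gaussianReal m (σ ^ 2).toNNReal) (Ici 0)).toReal = Phi (m / σ) := by
  have h1 : gaussianReal m (σ ^ 2).toNNReal = (gaussianReal 0 1).map (fun z ↦ m - σ * z) := by
    have : (fun z : ℝ ↦ m - σ * z) = (fun x ↦ m - x) ∘ (fun z ↦ σ * z) := rfl
    rw [this, ← Measure.map_map (by fun_prop) (by fun_prop), gaussianReal_map_const_mul,
      gaussianReal_map_const_sub]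
    congr 1
    · ring
    · rw [mul_one]
      ext
      simp [sq_nonneg]
  rw [h1, Measure.map_apply (by fun_prop) measurableSet_Ici]
  have : (fun z : ℝ ↦ m - σ * z) ⁻¹' Ici 0 = Iic (m / σ) := by
    ext z
    simp only [mem_preimage, mem_Ici, mem_Iic, le_div_iff₀ hσ, sub_nonneg, mul_comm]
  rw [this, Phi]

/-- The two laws are those of a Gaussian log-likelihood ratio under the two hypotheses. -/
lemma gaussian_Ici_zero_sub {D : ℝ} (hD : 0 ≤ D) :
    ((gaussianReal (D / 2) D.toNNReal) (Ici 0)).toReal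
      - ((gaussianReal (-(D / 2)) D.toNNReal) (Ici 0)).toReal
      = 1 - 2 * Phi (-(√D / 2)) := by
  rcases hD.eq_or_lt with rfl | hD
  · have := Phi_neg 0
    simp only [neg_zero] at this
    simp
    linarith
  · have hs : 0 < √D := Real.sqrt_pos.2 hD
    obtain ⟨σ, hσ, rfl⟩ : ∃ σ : ℝ, 0 < σ ∧ D = σ ^ 2 := ⟨√D, hs, (Real.sq_sqrt hD.le).symm⟩
    rw [gaussian_Ici_zero _ hσ, gaussian_Ici_zero _ hσ, Real.sqrt_sq hσ.le]
    have e1 : σ ^ 2 / 2 / σ = σ / 2 := by field_simp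
    have e2 : -(σ ^ 2 / 2) / σ = -(σ / 2) := by field_simp
    rw [e1, e2, Phi_neg]
    ring

/-! ### Likelihood ratios and densities of products -/

/-- The Neyman–Pearson lemma, in the form used here: among all events, the one where the
log-likelihood ratio `l` is nonnegative maximises `P B - Q B`. -/
lemma neyman_pearson {α : Type*} [MeasurableSpace α] {P Q : Measure α}
    [IsProbabilityMeasure P] [IsProbabilityMeasure Q] {l : α → ℝ} (hl : Measurable l)
    (hPQ : P = Q.withDensity fun x ↦ ENNReal.ofReal (Real.exp (l x)))
    {B : Set α} (hB : MeasurableSet B) :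
    P.real B - Q.real B ≤ P.real {x | 0 ≤ l x} - Q.real {x | 0 ≤ l x} := by
  have hH : MeasurableSet {x | 0 ≤ l x} := measurableSet_le measurable_const hl
  set H := {x | 0 ≤ l x}
  have h1 : P (B \ H) ≤ Q (B \ H) := by
    rw [hPQ, withDensity_apply _ (hB.diff hH)]
    refine (setLIntegral_mono measurable_const (g := fun _ ↦ 1) fun x hx ↦ ?_).trans (by simp)
    have : l x < 0 := not_le.1 hx.2
    exact ENNReal.ofReal_le_one.2 (Real.exp_le_one_iff.2 this.le)
  have h2 : Q (H \ B) ≤ P (H \ B) := by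
    rw [hPQ, withDensity_apply _ (hH.diff hB)]
    refine le_trans (by simp) (setLIntegral_mono (f := fun _ ↦ 1)
      (hl.exp.ennreal_ofReal) fun x hx ↦ ?_)
    exact ENNReal.one_le_ofReal.2 (Real.one_le_exp hx.1)
  have h1' : P.real (B \ H) ≤ Q.real (B \ H) := ENNReal.toReal_mono (measure_ne_top _ _) h1
  have h2' : Q.real (H \ B) ≤ P.real (H \ B) := ENNReal.toReal_mono (measure_ne_top _ _) h2
  have a1 := measureReal_inter_add_sdiff (μ := P) (s := B) hH
  have a2 := measureReal_inter_add_sdiff (μ := Q) (s := B) hH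
  have a3 := measureReal_inter_add_sdiff (μ := P) (s := H) hB
  have a4 := measureReal_inter_add_sdiff (μ := Q) (s := H) hB
  rw [inter_comm] at a3 a4
  linarith

lemma gaussianReal_withDensity (a b : ℝ) {v : ℝ≥0} (hv : v ≠ 0) :
    gaussianReal a v = (gaussianReal b v).withDensity fun x ↦
      ENNReal.ofReal (Real.exp (((x - b) ^ 2 - (x - a) ^ 2) / (2 * v))) := by
  rw [gaussianReal_of_var_ne_zero a hv, gaussianReal_of_var_ne_zero b hv,
    ← withDensity_mul _ (measurable_gaussianPDF b v) (by fun_prop)]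
  congr 1
  ext x
  simp only [Pi.mul_apply, gaussianPDF]
  rw [← ENNReal.ofReal_mul (gaussianPDFReal_nonneg _ _ _)]
  simp only [gaussianPDFReal]
  rw [mul_assoc _ (Real.exp _), ← Real.exp_add]
  congr 3
  ring

lemma pi_withDensity {ι : Type*} [Fintype ι] {μ ν : ι → Measure ℝ}
    [∀ i, IsProbabilityMeasure (μ i)] [∀ i, IsProbabilityMeasure (ν i)]
    {f : ι → ℝ → ℝ≥0∞} (hf : ∀ i, Measurable (f i)) (h : ∀ i, μ i = (ν i).withDensity (f i)) :
    Measure.pi μ = (Measure.pi ν).withDensity fun x ↦ ∏ i, f i (x i) := by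
  refine Measure.pi_eq fun s hs ↦ ?_
  rw [withDensity_apply _ (MeasurableSet.univ_pi hs),
    ← lintegral_indicator (MeasurableSet.univ_pi hs)]
  -- the indicator of a box is a product of functions of the single coordinates
  have e : (pi univ s).indicator (fun x : ι → ℝ ↦ ∏ i, f i (x i))
      = fun x ↦ ∏ i, (s i).indicator (f i) (x i) := by
    ext x
    by_cases hx : x ∈ pi univ s
    · rw [indicator_of_mem hx]
      exact Finset.prod_congr rfl fun i _ ↦ (indicator_of_mem (hx i (mem_univ i)) _).symm
    · rw [indicator_of_notMem hx]
      obtain ⟨i, hi⟩ : ∃ i, x i ∉ s i := by simpa [Set.mem_pi] using hx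
      exact (Finset.prod_eq_zero (Finset.mem_univ i) (indicator_of_notMem hi _)).symm
  have hm i : Measurable ((s i).indicator (f i)) := (hf i).indicator (hs i)
  rw [e, lintegral_prod_eq_prod_lintegral_of_indepFun Finset.univ
    (fun i (x : ι → ℝ) ↦ (s i).indicator (f i) (x i))
    (iIndepFun_pi fun i ↦ (hm i).aemeasurable) fun i ↦ (hm i).comp (measurable_pi_apply i)]
  refine Finset.prod_congr rfl fun i _ ↦ ?_
  rw [h i, withDensity_apply _ (hs i), ← lintegral_indicator (hs i),
    ← (measurePreserving_eval ν i).lintegral_comp (hm i)]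

lemma pi_gaussianReal_map_sum {ι : Type*} [Fintype ι] (m : ι → ℝ) (v : ι → ℝ≥0) :
    (Measure.pi fun i ↦ gaussianReal (m i) (v i)).map (fun x ↦ ∑ i, x i)
      = gaussianReal (∑ i, m i) (∑ i, v i) := by
  have : IsProbabilityMeasure
      ((Measure.pi fun i ↦ gaussianReal (m i) (v i)).map (fun x ↦ ∑ i, x i)) :=
    Measure.isProbabilityMeasure_map (by fun_prop)
  refine Measure.ext_of_charFun ?_
  rw [charFun_map_sum_pi_eq_prod]
  ext t
  simp only [Finset.prod_apply, charFun_gaussianReal, ← Complex.exp_sum]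
  congr 1
  push_cast
  simp only [Finset.sum_sub_distrib, Finset.mul_sum, Finset.sum_mul, Finset.sum_div]

/-! ### Finite products of Gaussians with a common variance -/

/-- The log-likelihood ratio of `⨂ N(aᵢ, v)` with respect to `⨂ N(bᵢ, v)`. -/
noncomputable def logLik {ι : Type*} [Fintype ι] (a b : ι → ℝ) (v : ℝ≥0) (x : ι → ℝ) : ℝ :=
  ∑ i, ((x i - b i) ^ 2 - (x i - a i) ^ 2) / (2 * v)

lemma measurable_logLik {ι : Type*} [Fintype ι] (a b : ι → ℝ) (v : ℝ≥0) :
    Measurable (logLik a b v) := by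
  unfold logLik
  fun_prop

/-- The log-likelihood ratio is an affine function of `x`, hence is Gaussian under any product of
Gaussians `⨂ N(mᵢ, v)`. -/
lemma map_logLik {ι : Type*} [Fintype ι] (a b m : ι → ℝ) {v : ℝ≥0} (hv : v ≠ 0) :
    (Measure.pi fun i ↦ gaussianReal (m i) v).map (logLik a b v)
      = gaussianReal (∑ i, ((m i - b i) ^ 2 - (m i - a i) ^ 2) / (2 * v))
          ((∑ i, (a i - b i) ^ 2) / v).toNNReal := by
  have hv' : (v : ℝ) ≠ 0 := by exact_mod_cast hv
  have h1 i : (gaussianReal (m i) v).map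
      (fun t ↦ ((t - b i) ^ 2 - (t - a i) ^ 2) / (2 * v))
      = gaussianReal (((m i - b i) ^ 2 - (m i - a i) ^ 2) / (2 * v))
          ((a i - b i) ^ 2 / v).toNNReal := by
    have e : (fun t ↦ ((t - b i) ^ 2 - (t - a i) ^ 2) / (2 * v))
        = (· + (b i ^ 2 - a i ^ 2) / (2 * v)) ∘ (((a i - b i) / v) * ·) := by
      ext t
      simp only [Function.comp]
      field_simp
      ring
    rw [e, ← Measure.map_map (by fun_prop) (by fun_prop), gaussianReal_map_const_mul,
      gaussianReal_map_add_const]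
    congr 1
    · field_simp
      ring
    · ext
      rw [Real.coe_toNNReal _ (by positivity)]
      push_cast
      field_simp
  have e2 : logLik a b v = (fun x : ι → ℝ ↦ ∑ i, x i) ∘
      (fun x i ↦ ((x i - b i) ^ 2 - (x i - a i) ^ 2) / (2 * v)) := rfl
  rw [e2, ← Measure.map_map (by fun_prop) (by fun_prop),
    Measure.pi_map_pi (f := fun i t ↦ ((t - b i) ^ 2 - (t - a i) ^ 2) / (2 * v))
      (fun i ↦ by fun_prop)]
  simp only [h1]
  rw [pi_gaussianReal_map_sum, Finset.sum_div,
    Real.toNNReal_sum_of_nonneg fun i _ ↦ by positivity]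

lemma pi_gaussian_logLik {ι : Type*} [Fintype ι] (a b : ι → ℝ) {v : ℝ≥0} (hv : v ≠ 0) :
    (Measure.pi fun i ↦ gaussianReal (a i) v).real {x | 0 ≤ logLik a b v x}
      - (Measure.pi fun i ↦ gaussianReal (b i) v).real {x | 0 ≤ logLik a b v x}
      = 1 - 2 * Phi (-(√((∑ i, (a i - b i) ^ 2) / v) / 2)) := by
  have h (m : ι → ℝ) :
      (Measure.pi fun i ↦ gaussianReal (m i) v).real {x | 0 ≤ logLik a b v x}
        = (gaussianReal (∑ i, ((m i - b i) ^ 2 - (m i - a i) ^ 2) / (2 * v))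
          ((∑ i, (a i - b i) ^ 2) / v).toNNReal (Ici 0)).toReal := by
    rw [← map_logLik a b m hv, Measure.map_apply (measurable_logLik a b v) measurableSet_Ici]
    rfl
  rw [h a, h b, ← gaussian_Ici_zero_sub (by positivity)]
  have e1 : ∑ i, ((a i - b i) ^ 2 - (a i - a i) ^ 2) / (2 * v)
      = (∑ i, (a i - b i) ^ 2) / v / 2 := by
    rw [Finset.sum_div, Finset.sum_div]
    exact Finset.sum_congr rfl fun i _ ↦ by field_simp; ring
  have e2 : ∑ i, ((b i - b i) ^ 2 - (b i - a i) ^ 2) / (2 * v)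
      = -((∑ i, (a i - b i) ^ 2) / v / 2) := by
    rw [Finset.sum_div, Finset.sum_div, ← Finset.sum_neg_distrib]
    exact Finset.sum_congr rfl fun i _ ↦ by field_simp; ring
  rw [e1, e2]

lemma pi_gaussian_le {ι : Type*} [Fintype ι] (a b : ι → ℝ) {v : ℝ≥0} (hv : v ≠ 0)
    {B : Set (ι → ℝ)} (hB : MeasurableSet B) :
    |(Measure.pi fun i ↦ gaussianReal (a i) v).real B
      - (Measure.pi fun i ↦ gaussianReal (b i) v).real B|
      ≤ 1 - 2 * Phi (-(√((∑ i, (a i - b i) ^ 2) / v) / 2)) := by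
  have hd : (Measure.pi fun i ↦ gaussianReal (a i) v)
      = (Measure.pi fun i ↦ gaussianReal (b i) v).withDensity
        fun x ↦ ENNReal.ofReal (Real.exp (logLik a b v x)) := by
    rw [pi_withDensity (fun i ↦ by fun_prop)
      fun i ↦ gaussianReal_withDensity (a i) (b i) hv]
    congr 1
    ext x
    rw [logLik, Real.exp_sum, ENNReal.ofReal_prod_of_nonneg fun i _ ↦ (Real.exp_pos _).le]
  have h1 := neyman_pearson (measurable_logLik a b v) hd hB
  have h2 := neyman_pearson (measurable_logLik a b v) hd hB.compl
  rw [pi_gaussian_logLik a b hv] at h1 h2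
  rw [probReal_compl_eq_one_sub hB, probReal_compl_eq_one_sub hB] at h2
  exact abs_le.2 ⟨by linarith, h1⟩

/-! ### Countable products -/

/-- The cylinders form an algebra generating the product `σ`-algebra, so every event is within
arbitrarily small `P + Q` measure of a cylinder. -/
lemma abs_sub_le_of_cylinders {P Q : Measure (ℕ → ℝ)}
    [IsProbabilityMeasure P] [IsProbabilityMeasure Q] {C : ℝ}
    (h : ∀ (s : Finset ℕ) (S : Set (s → ℝ)), MeasurableSet S →
      |P.real (cylinder s S) - Q.real (cylinder s S)| ≤ C)
    {A : Set (ℕ → ℝ)} (hA : MeasurableSet A) : |P.real A - Q.real A| ≤ C := by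
  refine le_of_forall_pos_le_add fun ε hε ↦ ?_
  obtain ⟨t, ht, hlt⟩ := exists_measure_symmDiff_lt_of_generateFrom_isSetRing (μ := P + Q)
    (C := measurableCylinders fun _ : ℕ ↦ ℝ) isSetRing_measurableCylinders
    ⟨{univ}, countable_singleton _, singleton_subset_iff.2 (univ_mem_measurableCylinders _), by simp⟩
    generateFrom_measurableCylinders.symm hA (ENNReal.ofReal_pos.2 hε)
  have htm : MeasurableSet t := .of_mem_measurableCylinders ht
  have hr : P.real (t ∆ A) + Q.real (t ∆ A) < ε := by
    rw [← measureReal_add_apply]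
    exact (ENNReal.lt_ofReal_iff_toReal_lt (measure_ne_top _ _)).1 hlt
  have hPt := abs_le.1 (abs_measureReal_sub_le_measureReal_symmDiff (μ := P)
    htm.nullMeasurableSet hA.nullMeasurableSet)
  have hQt := abs_le.1 (abs_measureReal_sub_le_measureReal_symmDiff (μ := Q)
    htm.nullMeasurableSet hA.nullMeasurableSet)
  obtain ⟨s, S, hS, rfl⟩ := (mem_measurableCylinders t).1 ht
  have := abs_le.1 (h s S hS)
  exact abs_le.2 ⟨by linarith [hPt.1, hPt.2, hQt.1, hQt.2],
    by linarith [hPt.1, hPt.2, hQt.1, hQt.2]⟩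

/-- The result with the common variance given as an arbitrary `v : ℝ≥0` with `v = τ²`. -/
lemma tvDist_eq_of_marginals {τ : ℝ} (hτ : 0 < τ) {v : ℝ≥0} (hvτ : (v : ℝ) = τ ^ 2)
    {a b : ℕ → ℝ} (hab : Summable fun j ↦ (a j - b j) ^ 2)
    {P Q : Measure (ℕ → ℝ)} [IsProbabilityMeasure P] [IsProbabilityMeasure Q]
    (hP : ∀ s : Finset ℕ, P.map (fun f (j : s) ↦ f j)
      = Measure.pi fun j : s ↦ gaussianReal (a j) v)
    (hQ : ∀ s : Finset ℕ, Q.map (fun f (j : s) ↦ f j)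
      = Measure.pi fun j : s ↦ gaussianReal (b j) v) :
    tvDist P Q = 1 - 2 * Phi (-√(∑' j, (a j - b j) ^ 2) / (2 * τ)) := by
  have hv : v ≠ 0 := by
    rw [Ne, ← NNReal.coe_eq_zero, hvτ]
    exact (pow_pos hτ 2).ne'
  have hscale (x : ℝ) : -(√(x / v) / 2) = -√x / (2 * τ) := by
    rw [hvτ, Real.sqrt_div' _ (sq_nonneg τ), Real.sqrt_sq hτ.le]
    field_simp
  have hcyl {R : Measure (ℕ → ℝ)} {m : ℕ → ℝ}
      (hR : ∀ s : Finset ℕ, R.map (fun f (j : s) ↦ f j)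
        = Measure.pi fun j : s ↦ gaussianReal (m j) v)
      (s : Finset ℕ) {S : Set (s → ℝ)} (hS : MeasurableSet S) :
      R.real (cylinder s S)
        = (Measure.pi fun j : s ↦ gaussianReal (m j) v).real S := by
    rw [← hR s, map_measureReal_apply (by fun_prop) hS]
    rfl
  have hsum (s : Finset ℕ) : ∑ j : s, (a j - b j) ^ 2 = ∑ j ∈ s, (a j - b j) ^ 2 :=
    Finset.sum_coe_sort s fun j ↦ (a j - b j) ^ 2
  have hpart (s : Finset ℕ) : -√(∑' j, (a j - b j) ^ 2) / (2 * τ)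
      ≤ -√(∑ j ∈ s, (a j - b j) ^ 2) / (2 * τ) := by
    gcongr
    exact hab.sum_le_tsum s fun j _ ↦ sq_nonneg _
  have hupper (A : {A : Set (ℕ → ℝ) // MeasurableSet A}) : |(P A.1).toReal - (Q A.1).toReal|
      ≤ 1 - 2 * Phi (-√(∑' j, (a j - b j) ^ 2) / (2 * τ)) := by
    refine abs_sub_le_of_cylinders (fun s S hS ↦ ?_) A.2
    rw [hcyl hP s hS, hcyl hQ s hS]
    refine (pi_gaussian_le (fun j : s ↦ a j) (fun j : s ↦ b j) hv hS).trans ?_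
    rw [hscale, hsum]
    linarith [Phi_mono (hpart s)]
  have : Nonempty {A : Set (ℕ → ℝ) // MeasurableSet A} := ⟨⟨∅, .empty⟩⟩
  refine le_antisymm (ciSup_le hupper) ?_
  have hlower (s : Finset ℕ) :
      1 - 2 * Phi (-√(∑ j ∈ s, (a j - b j) ^ 2) / (2 * τ)) ≤ tvDist P Q := by
    have hS : MeasurableSet {x : s → ℝ | 0 ≤ logLik (fun j : s ↦ a j) (fun j : s ↦ b j)
        v x} := measurableSet_le measurable_const (measurable_logLik _ _ _)
    have := pi_gaussian_logLik (fun j : s ↦ a j) (fun j : s ↦ b j) hv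
    rw [← hcyl hP s hS, ← hcyl hQ s hS, hscale, hsum] at this
    rw [← this]
    exact (le_abs_self _).trans
      (le_ciSup (f := fun A : {A : Set (ℕ → ℝ) // MeasurableSet A} ↦
          |(P A.1).toReal - (Q A.1).toReal|)
        ⟨_, forall_mem_range.2 hupper⟩ ⟨cylinder s _, hS.cylinder⟩)
  -- the truncated arguments decrease to their limit, so right-continuity of `Phi` suffices
  have harg : Tendsto (fun s : Finset ℕ ↦ -√(∑ j ∈ s, (a j - b j) ^ 2) / (2 * τ)) atTop
      (𝓝[≥] (-√(∑' j, (a j - b j) ^ 2) / (2 * τ))) :=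
    tendsto_nhdsWithin_iff.2
      ⟨(((Real.continuous_sqrt.tendsto _).comp hab.hasSum).neg).div_const _,
        Eventually.of_forall hpart⟩
  have hPhi : Tendsto (fun s : Finset ℕ ↦ Phi (-√(∑ j ∈ s, (a j - b j) ^ 2) / (2 * τ))) atTop
      (𝓝 (Phi (-√(∑' j, (a j - b j) ^ 2) / (2 * τ)))) := by
    simp only [Phi_eq_cdf]
    exact ((cdf (gaussianReal 0 1)).right_continuous _).tendsto.comp harg
  exact le_of_tendsto ((hPhi.const_mul 2).const_sub 1) (Eventually.of_forall hlower)

theorem stmt_6 (τ : ℝ) (hτ : 0 < τ) (a b : ℕ → ℝ)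
    (hab : Summable fun j => (a j - b j) ^ 2)
    (P Q : MeasureTheory.Measure (ℕ → ℝ))
    [MeasureTheory.IsProbabilityMeasure P] [MeasureTheory.IsProbabilityMeasure Q]
    -- `P` is the countable product of the Gaussians `N(aⱼ, τ²)`:
    -- all of its finite-dimensional marginals are the corresponding
    -- finite products of Gaussians (this characterizes `P` uniquely)
    (hP : ∀ s : Finset ℕ,
      P.map (fun f (j : s) => f j)
        = MeasureTheory.Measure.pi fun j : s =>
            ProbabilityTheory.gaussianReal (a j) ⟨τ ^ 2, sq_nonneg τ⟩)
    (hQ : ∀ s : Finset ℕ,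
      Q.map (fun f (j : s) => f j)
        = MeasureTheory.Measure.pi fun j : s =>
            ProbabilityTheory.gaussianReal (b j) ⟨τ ^ 2, sq_nonneg τ⟩) :
    tvDist P Q
      = 1 - 2 * Phi (-(Real.sqrt (∑' j, (a j - b j) ^ 2)) / (2 * τ)) :=
  tvDist_eq_of_marginals hτ rfl hab hP hQ
end

section
/- Let d ≥ 1 and s > d/2. There exists a constant C = C(d,s) > 0, depending only on d and s, with the following property. Let L ≥ 1 be an integer, R > 0, and let X = {x₁,…,xₙ} ⊂ S^d be a spherical t-design with t ≥ 2L. Let f : S^d → ℝ be continuous, and for each integer L′ ≥ 0 let Π_{L′} f denote the (continuous representative of the) L²(μ)-orthogonal projection of f onto the finite-dimensional subspace 𝒫_{L′}^d of L²(μ). Assume that (i) Π_{2^j L} f converges to f uniformly on S^d as j → ∞, and (ii) ‖f − Π_{2^j L} f‖_{L²(μ)} ≤ R · (2^j L)^{−s} for every integer j ≥ 0. Then ((1/n) Σ_{i=1}^n (f(xᵢ) − Π_L f(xᵢ))²)^{1/2} ≤ C · L^{−s} · R. -/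
/-!
Write `P j` for the projection of `f` of degree `2 ^ j * L`. At the nodes, `f - P 0` is the sum of
the dyadic blocks `P (j + 1) - P j`, whose `L²` norms are at most `2 R (2 ^ j L) ^ (-s)` by
assumption. The link between the `L²` norm and the nodes is the Marcinkiewicz–Zygmund inequality
`marcinkiewicz_zygmund`: for `p ∈ 𝒫_M^d` and `M ≥ L`,
`(1/n) ∑ p(x_i)² ≤ C (M / L) ^ d ∫ p²`. The blocks are thus `O(2 ^ (j (d/2 - s)) L ^ (-s) R)` at the
nodes, and the resulting geometric series converges because `s > d / 2`.

The inequality is obtained from three facts, all resting on `kernel_lower`: the reproducing kernel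
`k` of a rotation-invariant space of polynomials of degree `≤ M` satisfies `k x y ≥ k x x / 2` when
`dist x y ≤ 1 / (2M)`. This is Bernstein's inequality along great circles, in an averaged form that
only uses Parseval's identity.

* `design_count`: a ball of radius `1 / (2M)` contains a fraction `O(L ^ (-d))` of the nodes. The
  square of the kernel of `𝒫_L^d` is integrated exactly by the design, and is at least
  `(dim 𝒫_L^d)² / 4` at each node of the ball.
* `exists_ballAvg_preimage`: each `p ∈ 𝒫_M^d` is the mean over balls of radius `1 / (2M)` of some
  `q ∈ 𝒫_M^d` with `∫ q² ≤ 4 ∫ p²`, because the eigenvalues of this averaging operator on `𝒫_M^d`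
  are at least `1 / 2`. Then `p(x_i)²` is at most the mean of `q²` over the ball around `x_i`, by the
  Cauchy–Schwarz inequality.
* `measure_ball_lower`: such a ball has measure at least a constant times `M ^ (-d)`.
-/

open MeasureTheory

noncomputable section

abbrev Sph (d : ℕ) := Metric.sphere (0 : EuclideanSpace ℝ (Fin (d+1))) 1

/-- Evaluation on the sphere of a polynomial in `d+1` variables. -/
def polyEval {d : ℕ} (q : MvPolynomial (Fin (d+1)) ℝ) (x : Sph d) : ℝ :=
  MvPolynomial.eval (fun i => (x : EuclideanSpace ℝ (Fin (d+1))) i) q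

/-- `f` is the restriction to the sphere of a real polynomial of total degree ≤ L,
i.e. `f ∈ 𝒫_L^d`. -/
def InPoly (d L : ℕ) (f : Sph d → ℝ) : Prop :=
  ∃ q : MvPolynomial (Fin (d+1)) ℝ, q.totalDegree ≤ L ∧ ∀ x, f x = polyEval q x

/-- Rotation (linear isometry) acting on the sphere. -/
def sphereRot {d : ℕ}
    (T : EuclideanSpace ℝ (Fin (d+1)) ≃ₗᵢ[ℝ] EuclideanSpace ℝ (Fin (d+1)))
    (x : Sph d) : Sph d :=
  ⟨T x, by
    have hx : ‖(x : EuclideanSpace ℝ (Fin (d+1)))‖ = 1 := by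
      simpa using mem_sphere_zero_iff_norm.mp x.2
    simp [mem_sphere_zero_iff_norm, hx]⟩

/-- `μ` is the normalized rotation-invariant (uniform) surface probability measure
on the sphere. -/
def IsUniform {d : ℕ} (μ : Measure (Sph d)) : Prop :=
  IsProbabilityMeasure μ ∧
    ∀ T : EuclideanSpace ℝ (Fin (d+1)) ≃ₗᵢ[ℝ] EuclideanSpace ℝ (Fin (d+1)),
      μ.map (sphereRot T) = μ

/-- `x` is a spherical `t`-design (w.r.t. the uniform measure `μ`). -/
def IsDesign {d : ℕ} (μ : Measure (Sph d)) {n : ℕ} (x : Fin n → Sph d) (t : ℕ) : Prop :=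
  ∀ q : MvPolynomial (Fin (d+1)) ℝ, q.totalDegree ≤ t →
    (∑ i, polyEval q (x i)) / n = ∫ y, polyEval q y ∂μ

end

/-! ### Rotations and spherical caps -/

theorem continuous_sphereRot {d : ℕ}
    (T : EuclideanSpace ℝ (Fin (d+1)) ≃ₗᵢ[ℝ] EuclideanSpace ℝ (Fin (d+1))) :
    Continuous (sphereRot T) :=
  Continuous.subtype_mk (T.continuous.comp continuous_subtype_val) _

theorem continuous_polyEval {d : ℕ} (q : MvPolynomial (Fin (d+1)) ℝ) :
    Continuous (polyEval q : Sph d → ℝ) := by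
  unfold polyEval
  refine q.continuous_eval.comp ?_
  fun_prop

theorem InPoly.continuous {d M : ℕ} {f : Sph d → ℝ} (hf : InPoly d M f) : Continuous f := by
  obtain ⟨q, -, hq⟩ := hf
  exact (continuous_polyEval q).congr fun x => (hq x).symm

theorem integrable_of_cont {d : ℕ} (μ : Measure (Sph d)) [IsFiniteMeasure μ] {f : Sph d → ℝ}
    (hf : Continuous f) : Integrable f μ :=
  hf.integrable_of_hasCompactSupport (HasCompactSupport.of_compactSpace f)

theorem integral_rot {d : ℕ} {μ : Measure (Sph d)} (hμ : IsUniform μ)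
    (T : EuclideanSpace ℝ (Fin (d+1)) ≃ₗᵢ[ℝ] EuclideanSpace ℝ (Fin (d+1)))
    {f : Sph d → ℝ} (hf : Continuous f) :
    ∫ y, f (sphereRot T y) ∂μ = ∫ y, f y ∂μ := by
  conv_rhs => rw [← hμ.2 T]
  rw [integral_map (continuous_sphereRot T).aemeasurable hf.aestronglyMeasurable]

theorem dist_sphereRot {d : ℕ}
    (T : EuclideanSpace ℝ (Fin (d+1)) ≃ₗᵢ[ℝ] EuclideanSpace ℝ (Fin (d+1))) (x y : Sph d) :
    dist (sphereRot T x) (sphereRot T y) = dist x y := by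
  rw [Subtype.dist_eq, Subtype.dist_eq]
  exact T.dist_map _ _

theorem norm_sph {d : ℕ} (x : Sph d) : ‖(x : EuclideanSpace ℝ (Fin (d+1)))‖ = 1 :=
  mem_sphere_zero_iff_norm.mp x.2

/-- The orthogonal group acts two-point homogeneously on the sphere: a reflection takes `x` to
`x'`, and a second one, fixing `x'`, takes the image of `y` to `y'`. -/
theorem exists_rot_pair {d : ℕ} {x y x' y' : Sph d} (h : dist x y = dist x' y') :
    ∃ T, sphereRot T x = x' ∧ sphereRot T y = y' := by
  let R₁ := (ℝ ∙ ((x : EuclideanSpace ℝ (Fin (d+1))) - x'))ᗮ.reflection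
  have h₁ : R₁ x = x' := Submodule.reflection_sub (by rw [norm_sph, norm_sph])
  let z : EuclideanSpace ℝ (Fin (d+1)) := R₁ y
  have hz : ‖z‖ = 1 := by simp [z]
  let R₂ := (ℝ ∙ (z - y'))ᗮ.reflection
  have h₂ : R₂ z = y' := Submodule.reflection_sub (by rw [norm_sph, hz])
  have h₃ : R₂ x' = x' := by
    refine Submodule.reflection_mem_subspace_eq_self ?_
    rw [Submodule.mem_orthogonal_singleton_iff_inner_right, inner_sub_left, sub_eq_zero]
    have hd : ‖z - x'‖ = ‖(y' : EuclideanSpace ℝ (Fin (d+1))) - x'‖ := by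
      rw [← dist_eq_norm, ← dist_eq_norm, ← h₁]
      rw [R₁.dist_map, h₁]
      rw [Subtype.dist_eq, Subtype.dist_eq] at h
      rw [dist_comm, h, dist_comm]
    have e₁ := norm_sub_sq_real z (x' : EuclideanSpace ℝ (Fin (d+1)))
    have e₂ := norm_sub_sq_real (y' : EuclideanSpace ℝ (Fin (d+1))) x'
    rw [hd] at e₁
    rw [norm_sph, norm_sph] at e₂
    rw [hz, norm_sph] at e₁
    linarith
  refine ⟨R₁.trans R₂, ?_, ?_⟩
  · ext1
    change R₂ (R₁ x) = _
    rw [h₁, h₃]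
  · ext1
    exact h₂

theorem exists_rot {d : ℕ} (x x' : Sph d) : ∃ T, sphereRot T x = x' :=
  (exists_rot_pair (x := x) (y := x) (x' := x') (y' := x') (by simp)).imp fun _ h => h.1

theorem preimage_ball {d : ℕ}
    (T : EuclideanSpace ℝ (Fin (d+1)) ≃ₗᵢ[ℝ] EuclideanSpace ℝ (Fin (d+1))) (x : Sph d) (δ : ℝ) :
    sphereRot T ⁻¹' Metric.ball (sphereRot T x) δ = Metric.ball x δ := by
  ext y
  simp [dist_sphereRot]

theorem measure_ball_eq {d : ℕ} {μ : Measure (Sph d)} (hμ : IsUniform μ) (x x' : Sph d) (δ : ℝ) :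
    μ (Metric.ball x' δ) = μ (Metric.ball x δ) := by
  obtain ⟨T, rfl⟩ := exists_rot x x'
  conv_lhs => rw [← hμ.2 T]
  rw [Measure.map_apply (continuous_sphereRot T).measurable measurableSet_ball, preimage_ball]

theorem setIntegral_ball_rot {d : ℕ} {μ : Measure (Sph d)} (hμ : IsUniform μ)
    (T : EuclideanSpace ℝ (Fin (d+1)) ≃ₗᵢ[ℝ] EuclideanSpace ℝ (Fin (d+1)))
    (x : Sph d) (δ : ℝ) {f : Sph d → ℝ} (hf : Continuous f) :
    ∫ y in Metric.ball x δ, f (sphereRot T y) ∂μ =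
      ∫ y in Metric.ball (sphereRot T x) δ, f y ∂μ := by
  conv_rhs => rw [← hμ.2 T]
  rw [setIntegral_map measurableSet_ball hf.aestronglyMeasurable
    (continuous_sphereRot T).aemeasurable, preimage_ball]

/-- Lower bound for the measure of caps. The volume of `{(y, z) : |z - y| < δ}`, computed
by Fubini in both orders, compares `vol (ball 0 δ)` with the measure of a cap of radius `2δ` times
the volume of the shell `1 - δ ≤ |z| < 1 + δ`, which is `O(δ)`. -/
theorem measure_ball_lower {d : ℕ} {μ : Measure (Sph d)} (hμ : IsUniform μ) (x : Sph d) {δ : ℝ}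
    (h0 : 0 < δ) (h1 : δ ≤ 1 / 2) :
    δ ^ d ≤ (2 * (d + 1) * 2 ^ d) * μ.real (Metric.ball x (2 * δ)) := by
  have := hμ.1
  let V := EuclideanSpace ℝ (Fin (d+1))
  let v : Measure V := volume
  let S : Set V := Metric.ball 0 (1 + δ) \ Metric.ball 0 (1 - δ)
  have hb : ∀ (z : V) (r : ℝ), 0 ≤ r →
      v.real (Metric.ball z r) = r ^ (d+1) * v.real (Metric.ball 0 1) := by
    intro z r hr
    rw [measureReal_def, Measure.addHaar_ball v z hr, ENNReal.toReal_mul,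
      ENNReal.toReal_ofReal (by positivity), measureReal_def]
    simp [V]
  have hpos : 0 < v.real (Metric.ball 0 1) :=
    ENNReal.toReal_pos (Metric.measure_ball_pos v 0 one_pos).ne' measure_ball_lt_top.ne
  have hSm : MeasurableSet S := measurableSet_ball.diff measurableSet_ball
  have hS : v.real S = ((1 + δ) ^ (d+1) - (1 - δ) ^ (d+1)) * v.real (Metric.ball 0 1) := by
    have hsub : Metric.ball (0 : V) (1 - δ) ⊆ Metric.ball 0 (1 + δ) :=
      Metric.ball_subset_ball (by linarith)
    simp only [S]
    rw [measureReal_sdiff hsub measurableSet_ball measure_ball_lt_top.ne,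
      hb 0 (1 + δ) (by linarith), hb 0 (1 - δ) (by linarith)]
    ring
  let O : Set (Sph d × V) := {p | dist p.2 (p.1 : V) < δ}
  have hO : MeasurableSet O := by
    refine (isOpen_lt ?_ continuous_const).measurableSet
    fun_prop
  have e₁ : (μ.prod v) O = v (Metric.ball 0 δ) := by
    rw [Measure.prod_apply hO]
    have : ∀ y : Sph d, v (Prod.mk y ⁻¹' O) = v (Metric.ball 0 δ) := by
      intro y
      have : Prod.mk y ⁻¹' O = Metric.ball (y : V) δ := by ext z; simp [O]
      rw [this]
      exact Measure.addHaar_ball_center v _ _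
    simp [this]
  have e₂ : (μ.prod v) O ≤ μ (Metric.ball x (2 * δ)) * v S := by
    rw [Measure.prod_apply_symm hO]
    have : ∀ z : V, μ ((fun y => (y, z)) ⁻¹' O) ≤
        S.indicator (fun _ => μ (Metric.ball x (2 * δ))) z := by
      intro z
      by_cases hz : z ∈ S
      · rw [Set.indicator_of_mem hz]
        simp only [S, Set.mem_sdiff, mem_ball_zero_iff, not_lt] at hz
        have hz0 : 0 < ‖z‖ := by linarith
        let w : Sph d := ⟨‖z‖⁻¹ • z, by
          rw [mem_sphere_zero_iff_norm, norm_smul, norm_inv, norm_norm, inv_mul_cancel₀ hz0.ne']⟩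
        rw [measure_ball_eq hμ w x]
        refine measure_mono fun y hy => ?_
        simp only [O, Set.mem_preimage, Set.mem_ofPred_eq] at hy
        rw [Metric.mem_ball, Subtype.dist_eq]
        have hzw : dist z (w : V) ≤ δ := by
          have : z - (w : V) = (1 - ‖z‖⁻¹) • z := by simp [w, sub_smul]
          rw [dist_eq_norm, this, norm_smul, Real.norm_eq_abs]
          nth_rewrite 2 [← abs_of_pos hz0]
          rw [← abs_mul, sub_mul, inv_mul_cancel₀ hz0.ne', abs_le]
          constructor <;> linarith
        have := dist_triangle_left (y : V) w z
        linarith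
      · rw [Set.indicator_of_notMem hz]
        refine le_of_eq (measure_mono_null (t := ∅) (fun y hy => hz ?_) measure_empty)
        simp only [O, Set.mem_preimage, Set.mem_ofPred_eq] at hy
        have h3 : |‖z‖ - ‖(y : V)‖| ≤ dist z (y : V) := by
          rw [dist_eq_norm]; exact abs_norm_sub_norm_le z (y : V)
        rw [norm_sph y, abs_le] at h3
        simp only [S, Set.mem_sdiff, mem_ball_zero_iff, not_lt]
        constructor <;> linarith
    refine (lintegral_mono this).trans ?_
    rw [lintegral_indicator hSm, setLIntegral_const]
  rw [e₁] at e₂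
  have hSfin : v S ≠ ⊤ := ((measure_mono Set.sdiff_subset).trans_lt measure_ball_lt_top).ne
  have e₃ : v.real (Metric.ball 0 δ) ≤ μ.real (Metric.ball x (2 * δ)) * v.real S := by
    have := ENNReal.toReal_mono (ENNReal.mul_ne_top (measure_ne_top _ _) hSfin) e₂
    rwa [ENNReal.toReal_mul] at this
  rw [hS, hb _ _ h0.le] at e₃
  have e₄ : δ ^ (d+1) ≤ μ.real (Metric.ball x (2 * δ)) * ((1 + δ) ^ (d+1) - (1 - δ) ^ (d+1)) := by
    rw [← mul_assoc] at e₃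
    exact le_of_mul_le_mul_right e₃ hpos
  have e₅ : (1 + δ) ^ (d+1) - (1 - δ) ^ (d+1) ≤ 2 * δ * ((d + 1) * 2 ^ d) := by
    have := abs_pow_sub_pow_le (1 + δ) (1 - δ) (d + 1)
    have hm : max |1 + δ| |1 - δ| ≤ 2 := by
      rw [abs_of_pos (by linarith), abs_of_pos (by linarith)]
      exact max_le (by linarith) (by linarith)
    have hm' : (max |1 + δ| |1 - δ|) ^ d ≤ 2 ^ d := pow_le_pow_left₀ (by positivity) hm _
    have h6 : |1 + δ - (1 - δ)| = 2 * δ := by rw [abs_of_pos] <;> linarith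
    rw [h6] at this
    simp only [Nat.add_sub_cancel, Nat.cast_add, Nat.cast_one] at this
    refine (le_abs_self _).trans (this.trans ?_)
    rw [mul_assoc]
    gcongr
  have e₆ : δ * δ ^ d ≤ δ * ((2 * (d + 1) * 2 ^ d) * μ.real (Metric.ball x (2 * δ))) := by
    calc δ * δ ^ d = δ ^ (d+1) := by ring
      _ ≤ _ := e₄
      _ ≤ μ.real (Metric.ball x (2 * δ)) * (2 * δ * ((d + 1) * 2 ^ d)) := by gcongr
      _ = _ := by ring
  exact le_of_mul_le_mul_left e₆ h0

/-! ### Polynomials on great circles -/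

theorem totalDegree_aeval_le {n M : ℕ} (l : Fin n → MvPolynomial (Fin n) ℝ)
    (hl : ∀ i, (l i).totalDegree ≤ 1) (q : MvPolynomial (Fin n) ℝ) (hq : q.totalDegree ≤ M) :
    (MvPolynomial.aeval l q).totalDegree ≤ M := by
  rw [MvPolynomial.aeval_def, MvPolynomial.eval₂_eq']
  refine MvPolynomial.totalDegree_finsetSum_le fun m hm => ?_
  have hm' := (MvPolynomial.le_totalDegree hm).trans hq
  refine (MvPolynomial.totalDegree_mul _ _).trans ?_
  rw [MvPolynomial.algebraMap_eq, MvPolynomial.totalDegree_C, zero_add]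
  refine (MvPolynomial.totalDegree_finsetProd _ _).trans (le_trans ?_ hm')
  rw [Finsupp.sum_fintype _ _ (fun _ => rfl)]
  refine Finset.sum_le_sum fun i _ => ?_
  refine (MvPolynomial.totalDegree_pow _ _).trans ?_
  exact (Nat.mul_le_mul_left _ (hl i)).trans (mul_one _).le

theorem InPoly.rot {d M : ℕ} {f : Sph d → ℝ} (hf : InPoly d M f)
    (T : EuclideanSpace ℝ (Fin (d+1)) ≃ₗᵢ[ℝ] EuclideanSpace ℝ (Fin (d+1))) :
    InPoly d M (fun x => f (sphereRot T x)) := by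
  obtain ⟨q, hq, hfq⟩ := hf
  let l : Fin (d+1) → MvPolynomial (Fin (d+1)) ℝ := fun i =>
    ∑ j, MvPolynomial.C (T (EuclideanSpace.single j 1) i) * MvPolynomial.X j
  refine ⟨MvPolynomial.aeval l q, totalDegree_aeval_le l (fun i => ?_) q hq, fun x => ?_⟩
  · refine MvPolynomial.totalDegree_finsetSum_le fun j _ => ?_
    refine (MvPolynomial.totalDegree_mul _ _).trans ?_
    simp
  · beta_reduce
    rw [hfq]
    unfold polyEval
    have hc : ∀ (q : MvPolynomial (Fin (d+1)) ℝ) (v : Fin (d+1) → ℝ),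
        MvPolynomial.eval v (MvPolynomial.aeval l q) =
        MvPolynomial.eval (fun i => MvPolynomial.eval v (l i)) q := by
      intro q v
      induction q using MvPolynomial.induction_on <;> simp_all
    rw [hc]
    congr 2
    ext i
    have hx : (x : EuclideanSpace ℝ (Fin (d+1))) =
        ∑ j, (x : EuclideanSpace ℝ (Fin (d+1))) j • EuclideanSpace.single j (1 : ℝ) := by
      ext k
      simp [Finset.sum_apply, Pi.single_apply]
    change T (x : EuclideanSpace ℝ (Fin (d+1))) i = _
    conv_lhs => rw [hx]
    simp [l, mul_comm]

open Polynomial in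
/-- Along the great circle `α ↦ cos α • a + sin α • b`, a polynomial of degree `≤ M` is a
trigonometric polynomial of degree `≤ M`: up to the factor `e^{iMα}`, it is a polynomial of
degree `≤ 2M` in `e^{iα}`. -/
theorem exists_trig {n M : ℕ} (q : MvPolynomial (Fin n) ℝ) (hq : q.totalDegree ≤ M)
    (a b : Fin n → ℝ) :
    ∃ P : ℂ[X], ∀ α : ℝ, P.natDegree ≤ 2 * M ∧
      (MvPolynomial.eval (fun i => Real.cos α * a i + Real.sin α * b i) q : ℂ) *
        Complex.exp (α * Complex.I) ^ M = P.eval (Complex.exp (α * Complex.I)) := by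
  -- `z * (cos α * a i + sin α * b i)` as a quadratic polynomial in `z = exp (i α)`
  let l : Fin n → ℂ[X] := fun i =>
    C ((a i : ℂ) / 2) * (X ^ 2 + 1) + C ((b i : ℂ) / (2 * Complex.I)) * (X ^ 2 - 1)
  have hl : ∀ i, (l i).natDegree ≤ 2 := by
    intro i
    simp only [l]
    compute_degree
  have hle : ∀ i (α : ℝ), (l i).eval (Complex.exp (α * Complex.I)) =
      ((Real.cos α * a i + Real.sin α * b i : ℝ) : ℂ) * Complex.exp (α * Complex.I) := by
    intro i α
    simp only [l, eval_add, eval_mul, eval_C, eval_pow, eval_X, eval_sub, eval_one]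
    push_cast
    have h1 : Complex.exp (-α * Complex.I) * Complex.exp (α * Complex.I) = 1 := by
      rw [← Complex.exp_add]; simp
    rw [Complex.cos, Complex.sin]
    set z := Complex.exp (α * Complex.I)
    set w := Complex.exp (-α * Complex.I)
    have hI : (Complex.I)⁻¹ = -Complex.I := Complex.inv_I
    simp only [div_eq_mul_inv, mul_inv, hI]
    linear_combination (-(a i : ℂ) / 2 - b i * Complex.I / 2) * h1
  refine ⟨∑ m ∈ q.support, C ((q.coeff m : ℝ) : ℂ) * ((∏ i, l i ^ m i) * X ^ (M - ∑ i, m i)),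
    fun α => ⟨?_, ?_⟩⟩
  · refine natDegree_sum_le_of_forall_le _ _ fun m hm => ?_
    have hm' := (MvPolynomial.le_totalDegree hm).trans hq
    rw [Finsupp.sum_fintype _ _ (fun _ => rfl)] at hm'
    refine (natDegree_C_mul_le _ _).trans (natDegree_mul_le.trans ?_)
    have h1 : (∏ i, l i ^ m i).natDegree ≤ ∑ i, 2 * m i := by
      refine (natDegree_prod_le _ _).trans (Finset.sum_le_sum fun i _ => ?_)
      refine natDegree_pow_le.trans ?_
      rw [mul_comm]
      exact Nat.mul_le_mul_right _ (hl i)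
    rw [← Finset.mul_sum] at h1
    rw [natDegree_X_pow]
    omega
  · rw [MvPolynomial.eval_eq', eval_finsetSum, Complex.ofReal_sum, Finset.sum_mul]
    refine Finset.sum_congr rfl fun m hm => ?_
    have hm' := (MvPolynomial.le_totalDegree hm).trans hq
    rw [Finsupp.sum_fintype _ _ (fun _ => rfl)] at hm'
    rw [eval_mul, eval_C, eval_mul, eval_prod, eval_pow, eval_X]
    simp only [eval_pow, hle, mul_pow, Finset.prod_mul_distrib, Finset.prod_pow_eq_pow_sum]
    rw [Complex.ofReal_mul, Complex.ofReal_prod]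
    simp only [Complex.ofReal_pow]
    rw [mul_assoc, mul_assoc, ← pow_add, Nat.add_sub_cancel' hm']

open Polynomial in
/-- An `L²` Bernstein inequality, in finite-difference form, for trigonometric polynomials of
degree `≤ M`: by Parseval, translation by `θ` multiplies the `m`-th coefficient by `e^{imθ}`, and
`|e^{imθ} - 1| ≤ M |θ|`. -/
theorem trig_bernstein {M : ℕ} (ψ : ℝ → ℝ) (P : ℂ[X]) (hP : P.natDegree ≤ 2 * M)
    (hψ : ∀ α : ℝ, (ψ α : ℂ) * Complex.exp (α * Complex.I) ^ M =
      P.eval (Complex.exp (α * Complex.I))) (θ : ℝ) :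
    ∫ α in (0 : ℝ)..2 * Real.pi, (ψ (α + θ) - ψ α) ^ 2 ≤
      (M * θ) ^ 2 * ∫ α in (0 : ℝ)..2 * Real.pi, ψ α ^ 2 := by
  have hz : ∀ α : ℝ, ‖Complex.exp (α * Complex.I)‖ = 1 := Complex.norm_exp_ofReal_mul_I
  -- `ψ` has frequencies `j - M`, and `w j` is the factor by which the difference acts on them
  let w : ℕ → ℂ := fun j => Complex.exp ((((j : ℝ) - M) * θ : ℝ) * Complex.I) - 1
  let Q : ℂ[X] := ∑ j ∈ Finset.range (2 * M + 1), C (P.coeff j * w j) * X ^ j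
  have hPs : P = ∑ j ∈ Finset.range (2 * M + 1), C (P.coeff j) * X ^ j :=
    as_sum_range_C_mul_X_pow' _ (by omega)
  have hQ : ∀ α : ℝ, ((ψ (α + θ) - ψ α : ℝ) : ℂ) * Complex.exp (α * Complex.I) ^ M =
      Q.eval (Complex.exp (α * Complex.I)) := by
    intro α
    have e1 := hψ (α + θ)
    have e2 := hψ α
    have h0 : Complex.exp (θ * Complex.I) ^ M ≠ 0 := pow_ne_zero _ (Complex.exp_ne_zero _)
    have h1 : Complex.exp ((α + θ : ℝ) * Complex.I) =
        Complex.exp (α * Complex.I) * Complex.exp (θ * Complex.I) := by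
      rw [← Complex.exp_add]; congr 1; push_cast; ring
    rw [h1] at e1
    set z := Complex.exp (α * Complex.I)
    set u := Complex.exp (θ * Complex.I)
    have hw : ∀ j : ℕ, u ^ M * (w j + 1) = u ^ j := by
      intro j
      simp only [w, sub_add_cancel, u, ← Complex.exp_nat_mul]
      rw [← Complex.exp_add]
      congr 1
      push_cast
      ring
    apply mul_left_cancel₀ h0
    have e3 : u ^ M * Q.eval z = P.eval (z * u) - u ^ M * P.eval z := by
      conv_rhs => rw [hPs]
      simp only [Q, eval_finsetSum, eval_mul, eval_C, eval_pow, eval_X, Finset.mul_sum]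
      rw [← Finset.sum_sub_distrib]
      refine Finset.sum_congr rfl fun j _ => ?_
      rw [mul_pow, ← hw j]
      ring
    rw [e3, ← e1, ← e2]
    push_cast
    ring
  -- Parseval's identity
  have key : ∀ (φ : ℝ → ℝ) (R : ℂ[X]), (∀ α : ℝ, (φ α : ℂ) * Complex.exp (α * Complex.I) ^ M =
      R.eval (Complex.exp (α * Complex.I))) →
      ∫ α in (0 : ℝ)..2 * Real.pi, φ α ^ 2 = 2 * Real.pi * ∑ j ∈ R.support, ‖R.coeff j‖ ^ 2 := by
    intro φ R h
    rw [sum_sq_norm_coeff_eq_circleAverage, Real.circleAverage_def, smul_eq_mul, ← mul_assoc,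
      mul_inv_cancel₀ (by positivity), one_mul]
    refine intervalIntegral.integral_congr fun α _ => ?_
    simp only [circleMap, Complex.ofReal_one, one_mul, zero_add]
    rw [← h α, norm_mul, norm_pow, hz, one_pow, mul_one, Complex.norm_real, Real.norm_eq_abs,
      sq_abs]
  have hsum : ∀ R : ℂ[X], R.natDegree ≤ 2 * M → ∑ j ∈ R.support, ‖R.coeff j‖ ^ 2 =
      ∑ j ∈ Finset.range (2 * M + 1), ‖R.coeff j‖ ^ 2 := by
    intro R hR
    refine Finset.sum_subset (fun j hj => ?_) (fun j _ hj => ?_)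
    · have := le_natDegree_of_mem_supp j hj
      rw [Finset.mem_range]; omega
    · rw [notMem_support_iff.mp hj]; simp
  have hQd : Q.natDegree ≤ 2 * M := by
    refine natDegree_sum_le_of_forall_le _ _ fun j hj => ?_
    rw [Finset.mem_range] at hj
    exact (natDegree_C_mul_X_pow_le _ _).trans (by omega)
  rw [key _ Q hQ, key _ P hψ, hsum Q hQd, hsum P hP, mul_left_comm]
  refine mul_le_mul_of_nonneg_left ?_ (by positivity)
  rw [Finset.mul_sum]
  refine Finset.sum_le_sum fun j hj => ?_
  have hc : Q.coeff j = P.coeff j * w j := by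
    simp only [Q, finsetSum_coeff, coeff_C_mul, coeff_X_pow, mul_ite, mul_one, mul_zero,
      Finset.sum_ite_eq, hj, if_true]
  have hwb : ‖w j‖ ≤ |(M : ℝ) * θ| := by
    have := Real.norm_exp_I_mul_ofReal_sub_one_le (x := ((j : ℝ) - M) * θ)
    rw [mul_comm] at this
    refine this.trans ?_
    rw [Real.norm_eq_abs, abs_mul, abs_mul]
    refine mul_le_mul_of_nonneg_right ?_ (abs_nonneg _)
    rw [Finset.mem_range] at hj
    have : (j : ℝ) ≤ 2 * M := by exact_mod_cast (by omega : j ≤ 2 * M)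
    rw [Nat.abs_cast, abs_le]
    constructor <;> linarith [(Nat.cast_nonneg j : (0 : ℝ) ≤ j)]
  rw [hc, norm_mul, mul_pow, mul_comm, ← sq_abs ((M : ℝ) * θ)]
  gcongr

/-! ### Reproducing kernels -/

theorem integrable_mul {d : ℕ} (μ : Measure (Sph d)) [IsFiniteMeasure μ] {f g : Sph d → ℝ}
    (hf : Continuous f) (hg : Continuous g) : Integrable (fun y => f y * g y) μ :=
  integrable_of_cont μ (hf.mul hg)

/-- Existence of an orthonormal basis for a positive definite form `B` on a space without a norm. -/
theorem exists_form_basis {V : Type*} [AddCommGroup V] [Module ℝ V] [FiniteDimensional ℝ V]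
    (B : V →ₗ[ℝ] V →ₗ[ℝ] ℝ) (hs : ∀ v w, B v w = B w v) (hp : ∀ v, 0 ≤ B v v)
    (h0 : ∀ v, B v v = 0 → v = 0) :
    ∃ e : Fin (Module.finrank ℝ V) → V,
      (∀ i, B (e i) (e i) = 1) ∧ ∀ p, p = ∑ i, B p (e i) • e i := by
  let core : InnerProductSpace.Core ℝ V :=
    { inner := fun v w => B v w
      conj_inner_symm := fun v w => by simp [hs v w]
      re_inner_nonneg := fun v => by simpa using hp v
      add_left := fun u v w => by simp
      smul_left := fun u v r => by simp
      definite := h0 }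
  let : NormedAddCommGroup V := core.toNormedAddCommGroup
  let : InnerProductSpace ℝ V := InnerProductSpace.ofCore core.toCore
  have hin : ∀ v w : V, inner ℝ v w = B v w := fun _ _ => rfl
  let b := stdOrthonormalBasis ℝ V
  refine ⟨fun i => b i, fun i => ?_, fun p => ?_⟩
  · rw [← hin, real_inner_self_eq_norm_sq, b.norm_eq_one, one_pow]
  · conv_lhs => rw [← b.sum_repr' p]
    refine Finset.sum_congr rfl fun i _ => ?_
    rw [hin, hs]

/-- A symmetric operator all of whose eigenvalues are at least `c > 0` is onto, and its inverse has
norm at most `1 / c`. -/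
theorem exists_preimage_of_eigenvalues {V : Type*} [AddCommGroup V] [Module ℝ V]
    [FiniteDimensional ℝ V]
    (B : V →ₗ[ℝ] V →ₗ[ℝ] ℝ) (hs : ∀ v w, B v w = B w v) (hp : ∀ v, 0 ≤ B v v)
    (h0 : ∀ v, B v v = 0 → v = 0) (A : V →ₗ[ℝ] V) (hA : ∀ v w, B (A v) w = B v (A w))
    {c : ℝ} (hc : 0 < c) (hev : ∀ (r : ℝ) (v : V), v ≠ 0 → A v = r • v → c ≤ r) (p : V) :
    ∃ q, A q = p ∧ c ^ 2 * B q q ≤ B p p := by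
  let core : InnerProductSpace.Core ℝ V :=
    { inner := fun v w => B v w
      conj_inner_symm := fun v w => by simp [hs v w]
      re_inner_nonneg := fun v => by simpa using hp v
      add_left := fun u v w => by simp
      smul_left := fun u v r => by simp
      definite := h0 }
  let : NormedAddCommGroup V := core.toNormedAddCommGroup
  let : InnerProductSpace ℝ V := InnerProductSpace.ofCore core.toCore
  have hin : ∀ v w : V, inner ℝ v w = B v w := fun _ _ => rfl
  have hsym : A.IsSymmetric := fun v w => hA v w
  -- expansion in an orthonormal basis of eigenvectors
  have hcoer : ∀ v, c * B v v ≤ B (A v) v := by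
    intro v
    let b := hsym.eigenvectorBasis (n := Module.finrank ℝ V) rfl
    have e1 : B v v = ∑ i, B (b i) v * B (b i) v := by
      rw [← hin, ← b.sum_inner_mul_inner v v]
      refine Finset.sum_congr rfl fun i _ => ?_
      rw [hin, hin, hs v]
    have hb : ∀ i, A (b i) = hsym.eigenvalues rfl i • b i := fun i => by
      exact hsym.apply_eigenvectorBasis (n := Module.finrank ℝ V) rfl i
    have e2 : B (A v) v = ∑ i, hsym.eigenvalues rfl i * (B (b i) v * B (b i) v) := by
      rw [← hin, ← b.sum_inner_mul_inner (A v) v]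
      refine Finset.sum_congr rfl fun i _ => ?_
      rw [hin, hin, hA, hb, map_smul, smul_eq_mul, hs v]
      ring
    rw [e1, e2, Finset.mul_sum]
    refine Finset.sum_le_sum fun i _ => ?_
    exact mul_le_mul_of_nonneg_right
      (hev _ _ (b.orthonormal.ne_zero i) (hb i)) (mul_self_nonneg _)
  have hinj : Function.Injective A := by
    rw [injective_iff_map_eq_zero]
    intro v hv
    refine h0 v (le_antisymm ?_ (hp v))
    have := hcoer v
    rw [hv, map_zero, LinearMap.zero_apply] at this
    nlinarith
  obtain ⟨q, rfl⟩ := LinearMap.surjective_of_injective hinj p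
  refine ⟨q, rfl, ?_⟩
  have h1 := hp (A q - c • q)
  have h2 := hcoer q
  simp only [map_sub, map_smul, LinearMap.sub_apply, LinearMap.smul_apply, smul_eq_mul,
    hs q (A q)] at h1
  nlinarith

theorem uniform_ball_pos {d : ℕ} {μ : Measure (Sph d)} (hμ : IsUniform μ) (x : Sph d) {δ : ℝ}
    (h0 : 0 < δ) (h1 : δ ≤ 1) : 0 < μ.real (Metric.ball x δ) := by
  have := measure_ball_lower hμ x (half_pos h0) (by linarith)
  rw [mul_div_cancel₀ _ two_ne_zero] at this
  exact pos_of_mul_pos_right ((pow_pos (half_pos h0) d).trans_le this) (by positivity)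

theorem eq_zero_of_integral_sq {d : ℕ} {μ : Measure (Sph d)} (hμ : IsUniform μ) {f : Sph d → ℝ}
    (hf : Continuous f) (h : ∫ y, f y * f y ∂μ = 0) : f = 0 := by
  have := hμ.1
  have : μ.IsOpenPosMeasure := by
    refine ⟨fun U hU ⟨x, hx⟩ h => ?_⟩
    obtain ⟨ε, hε, hεU⟩ := Metric.isOpen_iff.mp hU x hx
    have h1 := uniform_ball_pos hμ x (lt_min hε one_pos) (min_le_right _ _)
    have h2 : μ (Metric.ball x (min ε 1)) = 0 :=
      measure_mono_null ((Metric.ball_subset_ball (min_le_left _ _)).trans hεU) h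
    rw [measureReal_def, h2] at h1
    simp at h1
  have h2 := (integral_eq_zero_iff_of_nonneg (fun y => mul_self_nonneg (f y))
    (integrable_of_cont μ (hf.mul hf))).mp h
  have h3 := (hf.mul hf).ae_eq_iff_eq μ continuous_const |>.mp h2
  ext y
  exact mul_self_eq_zero.mp (congrFun h3 y)

/-- The `L²(μ)` inner product on a space of continuous functions on the sphere. -/
noncomputable def l2Form {d : ℕ} (μ : Measure (Sph d)) [IsFiniteMeasure μ]
    (E : Submodule ℝ (Sph d → ℝ)) (hE : ∀ f ∈ E, Continuous f) : E →ₗ[ℝ] E →ₗ[ℝ] ℝ :=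
  LinearMap.mk₂ ℝ (fun p q => ∫ y, (p : Sph d → ℝ) y * (q : Sph d → ℝ) y ∂μ)
    (fun p p' q => by
      rw [← integral_add (integrable_mul μ (hE p p.2) (hE q q.2))
        (integrable_mul μ (hE p' p'.2) (hE q q.2))]
      simp [add_mul])
    (fun c p q => by simp [mul_assoc, integral_const_mul])
    (fun p q q' => by
      rw [← integral_add (integrable_mul μ (hE p p.2) (hE q q.2))
        (integrable_mul μ (hE p p.2) (hE q' q'.2))]
      simp [mul_add])
    (fun c p q => by simp [mul_left_comm, integral_const_mul])

theorem l2Form_apply {d : ℕ} (μ : Measure (Sph d)) [IsFiniteMeasure μ]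
    (E : Submodule ℝ (Sph d → ℝ)) (hE : ∀ f ∈ E, Continuous f) (p q : E) :
    l2Form μ E hE p q = ∫ y, (p : Sph d → ℝ) y * (q : Sph d → ℝ) y ∂μ := rfl

theorem l2Form_symm {d : ℕ} (μ : Measure (Sph d)) [IsFiniteMeasure μ]
    (E : Submodule ℝ (Sph d → ℝ)) (hE : ∀ f ∈ E, Continuous f) (p q : E) :
    l2Form μ E hE p q = l2Form μ E hE q p := by
  simp only [l2Form_apply, mul_comm]

theorem l2Form_nonneg {d : ℕ} (μ : Measure (Sph d)) [IsFiniteMeasure μ]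
    (E : Submodule ℝ (Sph d → ℝ)) (hE : ∀ f ∈ E, Continuous f) (p : E) :
    0 ≤ l2Form μ E hE p p := integral_nonneg fun _ => mul_self_nonneg _

theorem l2Form_definite {d : ℕ} {μ : Measure (Sph d)} (hμ : IsUniform μ) [IsFiniteMeasure μ]
    (E : Submodule ℝ (Sph d → ℝ)) (hE : ∀ f ∈ E, Continuous f) (p : E)
    (h : l2Form μ E hE p p = 0) : p = 0 :=
  Subtype.ext (eq_zero_of_integral_sq hμ (hE p p.2) h)

/-- `k` is the reproducing kernel of the space `E` of continuous functions, for the `L²(μ)` inner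
product. The decomposition into a finite sum of squares of elements of `E` is included. -/
structure IsKernel {d : ℕ} (μ : Measure (Sph d)) (E : Submodule ℝ (Sph d → ℝ))
    (k : Sph d → Sph d → ℝ) : Prop where
  mem : ∀ x, k x ∈ E
  symm : ∀ x y, k x y = k y x
  repr : ∀ p ∈ E, ∀ x, ∫ y, k x y * p y ∂μ = p x
  sum_sq : ∃ (r : ℕ) (e : Fin r → Sph d → ℝ), (∀ i, e i ∈ E) ∧ ∀ x y, k x y = ∑ i, e i x * e i y

theorem exists_kernel {d : ℕ} {μ : Measure (Sph d)} (hμ : IsUniform μ)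
    (E : Submodule ℝ (Sph d → ℝ)) [FiniteDimensional ℝ E] (hE : ∀ f ∈ E, Continuous f) :
    ∃ k, IsKernel μ E k ∧ ∫ x, k x x ∂μ = Module.finrank ℝ E := by
  have := hμ.1
  obtain ⟨e, he1, he⟩ := exists_form_basis (l2Form μ E hE) (l2Form_symm μ E hE)
    (l2Form_nonneg μ E hE) (l2Form_definite hμ E hE)
  have hec : ∀ i, Continuous (e i : Sph d → ℝ) := fun i => hE _ (e i).2
  refine ⟨fun x y => ∑ i, (e i : Sph d → ℝ) x * (e i : Sph d → ℝ) y, ⟨fun x => ?_, fun x y => ?_,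
    fun p hp x => ?_, _, fun i => e i, fun i => (e i).2, fun x y => rfl⟩, ?_⟩
  · have : (fun y => ∑ i, (e i : Sph d → ℝ) x * (e i : Sph d → ℝ) y) =
        ∑ i, (e i : Sph d → ℝ) x • (e i : Sph d → ℝ) := by
      ext y; simp [Finset.sum_apply]
    rw [this]
    exact Submodule.sum_mem _ fun i _ => Submodule.smul_mem _ _ (e i).2
  · simp only [mul_comm]
  · have h := congrArg (fun q : E => (q : Sph d → ℝ) x) (he ⟨p, hp⟩)
    simp only [Submodule.coe_sum, Submodule.coe_smul, Finset.sum_apply, Pi.smul_apply,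
      smul_eq_mul, l2Form_apply] at h
    rw [h]
    simp only [Finset.sum_mul, mul_assoc]
    rw [integral_finsetSum _ fun i _ => (integrable_mul μ (hec i) (hE p hp)).const_mul _]
    refine Finset.sum_congr rfl fun i _ => ?_
    rw [integral_const_mul, mul_comm]
    simp only [mul_comm]
  · rw [integral_finsetSum _ fun i _ => integrable_mul μ (hec i) (hec i)]
    simp only [l2Form_apply] at he1
    simp [he1]

theorem sphereRot_symm_apply {d : ℕ}
    (T : EuclideanSpace ℝ (Fin (d+1)) ≃ₗᵢ[ℝ] EuclideanSpace ℝ (Fin (d+1))) (x : Sph d) :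
    sphereRot T.symm (sphereRot T x) = x := by
  ext1
  exact T.symm_apply_apply _

/-- Uniqueness of the reproducing kernel makes that of a rotation-invariant space invariant. -/
theorem IsKernel.rot {d : ℕ} {μ : Measure (Sph d)} (hμ : IsUniform μ)
    {E : Submodule ℝ (Sph d → ℝ)} (hE : ∀ f ∈ E, Continuous f)
    (hinv : ∀ f ∈ E, ∀ T, (fun x => f (sphereRot T x)) ∈ E)
    {k : Sph d → Sph d → ℝ} (hk : IsKernel μ E k)
    (T : EuclideanSpace ℝ (Fin (d+1)) ≃ₗᵢ[ℝ] EuclideanSpace ℝ (Fin (d+1))) (x y : Sph d) :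
    k (sphereRot T x) (sphereRot T y) = k x y := by
  have := hμ.1
  let g : Sph d → ℝ := fun y => k (sphereRot T x) (sphereRot T y)
  have hg : g ∈ E := hinv _ (hk.mem _) T
  have hgr : ∀ q ∈ E, ∫ y, g y * q y ∂μ = q x := by
    intro q hq
    have h1 := hk.repr _ (hinv q hq T.symm) (sphereRot T x)
    rw [← integral_rot hμ T (f := fun y => k (sphereRot T x) y * q (sphereRot T.symm y))
      ((hE _ (hk.mem _)).mul (hE _ (hinv q hq T.symm)))] at h1
    simpa only [sphereRot_symm_apply] using h1
  have hsub : g - k x ∈ E := E.sub_mem hg (hk.mem x)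
  have h0 : g - k x = 0 := by
    refine eq_zero_of_integral_sq hμ (hE _ hsub) ?_
    have : ∀ y, (g - k x) y * (g - k x) y = g y * (g - k x) y - k x y * (g - k x) y := by
      intro y
      simp only [Pi.sub_apply]
      ring
    simp only [this]
    rw [integral_sub (integrable_mul μ (hE _ hg) (hE _ hsub))
      (integrable_mul μ (hE _ (hk.mem x)) (hE _ hsub)), hgr _ hsub, hk.repr _ hsub,
      sub_self]
  exact sub_eq_zero.mp (congrFun h0 y)

/-! ### Size of reproducing kernels near the diagonal -/

theorem exists_unit_orthogonal {d : ℕ} (hd : 1 ≤ d) (x : Sph d) :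
    ∃ b : EuclideanSpace ℝ (Fin (d+1)), ‖b‖ = 1 ∧
      inner ℝ (x : EuclideanSpace ℝ (Fin (d+1))) b = 0 := by
  have hx : (x : EuclideanSpace ℝ (Fin (d+1))) ≠ 0 := by
    intro h
    have := norm_sph x
    rw [h, norm_zero] at this
    exact zero_ne_one this
  have : Fact (Module.finrank ℝ (EuclideanSpace ℝ (Fin (d+1))) = d + 1) := ⟨by simp⟩
  have hf := Submodule.finrank_orthogonal_span_singleton (𝕜 := ℝ) (n := d) hx
  have : Nontrivial (ℝ ∙ (x : EuclideanSpace ℝ (Fin (d+1))))ᗮ :=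
    Module.nontrivial_of_finrank_pos (R := ℝ) (by omega)
  obtain ⟨b, hb⟩ := exists_norm_eq (ℝ ∙ (x : EuclideanSpace ℝ (Fin (d+1))))ᗮ zero_le_one
  exact ⟨b, hb, Submodule.mem_orthogonal_singleton_iff_inner_right.mp b.2⟩

theorem dist_sq_sph {d : ℕ} (x y : Sph d) :
    dist x y ^ 2 = 2 - 2 * inner ℝ (x : EuclideanSpace ℝ (Fin (d+1))) y := by
  rw [Subtype.dist_eq, dist_eq_norm, norm_sub_sq_real, norm_sph, norm_sph]
  ring

/-- A rotation-invariant reproducing kernel of polynomials of degree `≤ M` is at least half its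
diagonal value at points of distance `≤ 1 / (2M)`. Along a great circle through `x` and `y` this is
the Bernstein inequality applied to the functions `e i` with `k = ∑ i, e i ⊗ e i`. -/
theorem kernel_lower {d M : ℕ} (hd : 1 ≤ d) {μ : Measure (Sph d)} (hμ : IsUniform μ)
    {E : Submodule ℝ (Sph d → ℝ)} (hE : ∀ f ∈ E, InPoly d M f)
    (hinv : ∀ f ∈ E, ∀ T, (fun x => f (sphereRot T x)) ∈ E)
    {k : Sph d → Sph d → ℝ} (hk : IsKernel μ E k) {x y : Sph d} (hxy : 2 * M * dist x y ≤ 1) :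
    k x x / 2 ≤ k x y := by
  have hrot := hk.rot hμ (fun f hf => (hE f hf).continuous) hinv
  have hpair : ∀ {x y x' y' : Sph d}, dist x y = dist x' y' → k x y = k x' y' := by
    intro x y x' y' h
    obtain ⟨T, rfl, rfl⟩ := exists_rot_pair h
    exact (hrot T _ _).symm
  obtain ⟨b, hb, hxb⟩ := exists_unit_orthogonal hd x
  let g : ℝ → EuclideanSpace ℝ (Fin (d+1)) := fun α =>
    Real.cos α • (x : EuclideanSpace ℝ (Fin (d+1))) + Real.sin α • b
  have hgg : ∀ α β, inner ℝ (g α) (g β) = Real.cos (β - α) := by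
    intro α β
    simp only [g, inner_add_left, inner_add_right, real_inner_smul_left, real_inner_smul_right,
      real_inner_self_eq_norm_sq, hb, norm_sph, hxb, real_inner_comm (x : EuclideanSpace ℝ _) b]
    rw [Real.cos_sub]
    ring
  have hg1 : ∀ α, ‖g α‖ = 1 := by
    intro α
    have := hgg α α
    rw [real_inner_self_eq_norm_sq, sub_self, Real.cos_zero] at this
    exact (pow_eq_one_iff_of_nonneg (norm_nonneg _) two_ne_zero).mp this
  let γ : ℝ → Sph d := fun α => ⟨g α, mem_sphere_zero_iff_norm.mpr (hg1 α)⟩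
  have hγ : ∀ α β, dist (γ α) (γ β) ^ 2 = 2 - 2 * Real.cos (β - α) := by
    intro α β
    rw [dist_sq_sph, ← hgg]
  let θ := Real.arccos (inner ℝ (x : EuclideanSpace ℝ (Fin (d+1))) y)
  have habs : |inner ℝ (x : EuclideanSpace ℝ (Fin (d+1))) y| ≤ 1 := by
    have := abs_real_inner_le_norm (x : EuclideanSpace ℝ (Fin (d+1))) y
    rwa [norm_sph, norm_sph, one_mul] at this
  have hθ : Real.cos θ = inner ℝ (x : EuclideanSpace ℝ (Fin (d+1))) y :=
    Real.cos_arccos (abs_le.mp habs).1 (abs_le.mp habs).2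
  have hθ0 : 0 ≤ θ := Real.arccos_nonneg _
  have hθd : θ ≤ 2 * dist x y := by
    have h1 : dist x y ^ 2 = 2 - 2 * Real.cos θ := by rw [dist_sq_sph, hθ]
    have h2 := Real.cos_le_one_sub_mul_cos_sq (x := θ)
      (by rw [abs_of_nonneg hθ0]; exact Real.arccos_le_pi _)
    have h3 : 1 / 8 ≤ 2 / Real.pi ^ 2 := by
      rw [div_le_div_iff₀ (by norm_num) (by positivity)]
      nlinarith [Real.pi_le_four, Real.pi_pos]
    have h4 : 1 / 8 * θ ^ 2 ≤ 2 / Real.pi ^ 2 * θ ^ 2 := by gcongr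
    refine abs_le_of_sq_le_sq' ?_ (by positivity) |>.2
    nlinarith
  -- `k` depends only on the distance, so it is constant along pairs at fixed angle `θ`
  have hkγ : ∀ α, k (γ (α + θ)) (γ α) = k x y := by
    intro α
    refine hpair ?_
    rw [← sq_eq_sq₀ dist_nonneg dist_nonneg, hγ, dist_sq_sph, ← hθ]
    congr 2
    rw [← Real.cos_neg]
    congr 1
    ring
  have hkd : ∀ z, k z z = k x x := fun z => hpair (by simp)
  obtain ⟨r, e, he, hke⟩ := hk.sum_sq
  have hec : ∀ i, Continuous (fun α => e i (γ α)) := fun i => by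
    refine (hE _ (he i)).continuous.comp (Continuous.subtype_mk ?_ _)
    fun_prop
  have hB : ∀ i, ∫ α in (0 : ℝ)..2 * Real.pi, (e i (γ (α + θ)) - e i (γ α)) ^ 2 ≤
      (M * θ) ^ 2 * ∫ α in (0 : ℝ)..2 * Real.pi, e i (γ α) ^ 2 := by
    intro i
    obtain ⟨q, hq, heq⟩ := hE _ (he i)
    obtain ⟨P, hP⟩ := exists_trig q hq (fun j => (x : EuclideanSpace ℝ (Fin (d+1))) j)
      (fun j => b j)
    refine trig_bernstein (fun α => e i (γ α)) P (hP 0).1 (fun α => ?_) θ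
    rw [← (hP α).2, heq]
    rfl
  have hsum := Finset.sum_le_sum fun i (_ : i ∈ Finset.univ) => hB i
  rw [← Finset.mul_sum, ← intervalIntegral.integral_finsetSum, ← intervalIntegral.integral_finsetSum]
    at hsum
  · have e1 : ∀ α, ∑ i, (e i (γ (α + θ)) - e i (γ α)) ^ 2 = 2 * k x x - 2 * k x y := by
      intro α
      have : ∀ i, (e i (γ (α + θ)) - e i (γ α)) ^ 2 = e i (γ (α + θ)) * e i (γ (α + θ)) +
        e i (γ α) * e i (γ α) - 2 * (e i (γ (α + θ)) * e i (γ α)) := fun i => by ring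
      simp only [this, Finset.sum_sub_distrib, Finset.sum_add_distrib, ← Finset.mul_sum, ← hke,
        hkγ]
      rw [hkd, hkd (γ α)]
      ring
    have e2 : ∀ α, ∑ i, e i (γ α) ^ 2 = k x x := by
      intro α
      simp only [sq, ← hke, hkd]
    simp only [e1, e2, intervalIntegral.integral_const, smul_eq_mul, sub_zero] at hsum
    have hpos : 0 ≤ k x x := by rw [hke]; exact Finset.sum_nonneg fun i _ => mul_self_nonneg _
    have hMθ : (M * θ) ^ 2 ≤ 1 := by
      have h5 : M * θ ≤ 1 := by
        calc M * θ ≤ M * (2 * dist x y) := by gcongr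
          _ = 2 * M * dist x y := by ring
          _ ≤ 1 := hxy
      exact pow_le_one₀ (by positivity) h5
    have h6 : 2 * Real.pi * (2 * k x x - 2 * k x y) ≤ 2 * Real.pi * k x x := by
      refine hsum.trans (mul_le_of_le_one_left (by positivity) hMθ)
    have := le_of_mul_le_mul_left h6 (by positivity)
    linarith
  · exact fun i _ => ((hec i).pow 2).intervalIntegrable _ _
  · exact fun i _ => ((((hec i).comp (continuous_id.add continuous_const)).sub (hec i)).pow
      2).intervalIntegrable _ _

/-! ### Dimension of the polynomial spaces, and nodes in small balls -/

/-- `𝒫_M^d` as a space of functions on the sphere. -/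
noncomputable def polySpace (d M : ℕ) : Submodule ℝ (Sph d → ℝ) :=
  (MvPolynomial.restrictTotalDegree (Fin (d+1)) ℝ M).map
    ({ toFun := fun q => polyEval q
       map_add' := fun p q => funext fun x => (by simp [polyEval])
       map_smul' := fun c q => funext fun x => (by simp [polyEval]) } :
      MvPolynomial (Fin (d+1)) ℝ →ₗ[ℝ] (Sph d → ℝ))

theorem mem_polySpace {d M : ℕ} {f : Sph d → ℝ} : f ∈ polySpace d M ↔ InPoly d M f := by
  simp only [polySpace, Submodule.mem_map, MvPolynomial.mem_restrictTotalDegree, InPoly]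
  refine exists_congr fun q => and_congr_right fun _ => ?_
  exact ⟨fun h x => by rw [← h]; rfl, fun h => (funext h).symm⟩

instance (d M : ℕ) : FiniteDimensional ℝ (polySpace d M) := by
  unfold polySpace
  infer_instance

/-- The monomials in the first `d` coordinates with all exponents `≤ M / d` are linearly
independent on the sphere, since the projection of the sphere to these coordinates contains a
cube. -/
theorem finrank_polySpace {d : ℕ} (hd : 1 ≤ d) (M : ℕ) :
    (M / d + 1) ^ d ≤ Module.finrank ℝ (polySpace d M) := by
  let φ : MvPolynomial (Fin d) ℝ →ₐ[ℝ] (Sph d → ℝ) :=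
    MvPolynomial.aeval fun i (x : Sph d) => (x : EuclideanSpace ℝ (Fin (d+1))) i.castSucc
  have hφ : ∀ q x, φ q x =
      MvPolynomial.eval (fun i => (x : EuclideanSpace ℝ (Fin (d+1))) i.castSucc) q := by
    intro q x
    induction q using MvPolynomial.induction_on with
    | C a => simp [φ]
    | add p q hp hq => simp [hp, hq]
    | mul_X p i hp => simp [hp]; left; simp [φ]
  have hker : LinearMap.ker φ.toLinearMap = ⊥ := by
    rw [LinearMap.ker_eq_bot']
    intro q hq
    have hd0 : (0 : ℝ) < d := by exact_mod_cast hd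
    refine MvPolynomial.funext_set (fun _ => Set.Icc (0 : ℝ) (1 / d))
      (fun _ => Set.Icc_infinite (by positivity)) fun y hy => ?_
    have hsum : ∑ i, y i ^ 2 ≤ 1 := by
      calc ∑ i, y i ^ 2 ≤ ∑ _i : Fin d, (1 / (d : ℝ)) := by
            refine Finset.sum_le_sum fun i _ => ?_
            have h1 := hy i (Set.mem_univ i)
            have h2 : 1 / (d : ℝ) ≤ 1 := by
              rw [div_le_one hd0]
              exact_mod_cast hd
            nlinarith [h1.1, h1.2]
        _ = 1 := by simp; field_simp
    let x : EuclideanSpace ℝ (Fin (d+1)) :=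
      WithLp.toLp 2 (Fin.snoc (α := fun _ => ℝ) y (Real.sqrt (1 - ∑ i, y i ^ 2)))
    have hx : ‖x‖ = 1 := by
      rw [EuclideanSpace.norm_eq, Fin.sum_univ_castSucc]
      simp only [x, Fin.snoc_castSucc, Fin.snoc_last, Real.norm_eq_abs, sq_abs]
      rw [Real.sq_sqrt (by linarith)]
      simp
    have h3 := congrFun hq ⟨x, mem_sphere_zero_iff_norm.mpr hx⟩
    simp only [AlgHom.toLinearMap_apply, hφ, Pi.zero_apply] at h3
    simpa [x] using h3
  let v : (Fin d → Fin (M / d + 1)) → (Fin d →₀ ℕ) := fun a =>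
    Finsupp.equivFunOnFinite.symm fun i => (a i : ℕ)
  have hv : Function.Injective v := fun a b h => funext fun i =>
    Fin.ext (congrFun (Finsupp.equivFunOnFinite.symm.injective h) i)
  have hli := ((MvPolynomial.basisMonomials (Fin d) ℝ).linearIndependent.comp v hv).map' _ hker
  have hmem : ∀ a, φ (MvPolynomial.monomial (v a) 1) ∈ polySpace d M := by
    intro a
    refine mem_polySpace.mpr ⟨∏ i, MvPolynomial.X i.castSucc ^ (a i : ℕ), ?_, fun x => ?_⟩
    · refine (MvPolynomial.totalDegree_finsetProd _ _).trans ?_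
      calc ∑ i : Fin d, (MvPolynomial.X (R := ℝ) i.castSucc ^ (a i : ℕ)).totalDegree
          ≤ ∑ _i : Fin d, M / d := by
            refine Finset.sum_le_sum fun i _ => ?_
            rw [MvPolynomial.totalDegree_X_pow]
            exact Nat.lt_succ_iff.mp (a i).2
        _ ≤ M := by simpa using Nat.mul_div_le M d
    · rw [hφ, MvPolynomial.eval_monomial]
      simp [polyEval, v, Finsupp.prod_fintype]
  let w : (Fin d → Fin (M / d + 1)) → polySpace d M := fun a => ⟨_, hmem a⟩
  have hw : LinearIndependent ℝ w := by
    refine LinearIndependent.of_comp (polySpace d M).subtype ?_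
    have h4 : (polySpace d M).subtype ∘ w =
        φ.toLinearMap ∘ MvPolynomial.basisMonomials (Fin d) ℝ ∘ v := by
      ext a
      simp [w]
    rw [h4]
    exact hli
  simpa using hw.fintype_card_le_finrank

theorem finrank_polySpace_real {d : ℕ} (hd : 1 ≤ d) (M : ℕ) :
    ((M : ℝ) / d) ^ d ≤ Module.finrank ℝ (polySpace d M) := by
  have h1 : (M : ℝ) / d ≤ ((M / d + 1 : ℕ) : ℝ) := by
    rw [div_le_iff₀ (by exact_mod_cast hd)]
    have := Nat.div_add_mod M d
    have h3 := Nat.mod_lt M hd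
    have h2 : M ≤ (M / d + 1) * d := by nlinarith
    exact_mod_cast h2
  calc ((M : ℝ) / d) ^ d ≤ ((M / d + 1 : ℕ) : ℝ) ^ d := by gcongr
    _ ≤ _ := by exact_mod_cast finrank_polySpace hd M

/-- When `M ≥ L`, a ball of radius `1 / (2M)` contains a fraction at most `4 (d / L) ^ d` of the
nodes of a spherical `2L`-design: the square of the reproducing kernel of `𝒫_L^d` at `y`, of degree
`2L`, is integrated exactly, and it is large at the nodes close to `y`. -/
theorem design_count {d : ℕ} (hd : 1 ≤ d) {μ : Measure (Sph d)} (hμ : IsUniform μ) {L M : ℕ}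
    (hL : 1 ≤ L) (hLM : L ≤ M) {n : ℕ} (x : Fin n → Sph d) {t : ℕ} (ht : 2 * L ≤ t)
    (hx : IsDesign μ x t) (y : Sph d) :
    ((L : ℝ) / d) ^ d * ((∑ i, (Metric.ball (x i) (1 / (2 * M))).indicator 1 y) / n) ≤ 4 := by
  have := hμ.1
  have hM0 : (0 : ℝ) < M := by exact_mod_cast hL.trans hLM
  have hE : ∀ f ∈ polySpace d L, InPoly d L f := fun f hf => mem_polySpace.mp hf
  have hinv : ∀ f ∈ polySpace d L, ∀ T, (fun x => f (sphereRot T x)) ∈ polySpace d L :=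
    fun f hf T => mem_polySpace.mpr ((hE f hf).rot T)
  obtain ⟨k, hk, hkint⟩ := exists_kernel hμ (polySpace d L) fun f hf => (hE f hf).continuous
  have hrot := hk.rot hμ (fun f hf => (hE f hf).continuous) hinv
  set K : ℝ := (Module.finrank ℝ (polySpace d L) : ℝ) with hK
  have hdiag : ∀ z, k z z = K := by
    intro z
    have h1 : ∀ w, k w w = k z z := by
      intro w
      obtain ⟨T, rfl⟩ := exists_rot z w
      exact hrot T z z
    simpa [h1] using hkint
  have hKL := finrank_polySpace_real hd L
  rw [← hK] at hKL
  have hK0 : 0 < K := lt_of_lt_of_le (by positivity) hKL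
  -- `∫ (k y)² = k y y = K` by the reproducing property
  obtain ⟨q, hq, hqk⟩ := hE _ (hk.mem y)
  have hdes := hx (q * q) (((MvPolynomial.totalDegree_mul _ _).trans (by omega)))
  have hmul : ∀ z, polyEval (q * q) z = k y z * k y z := by
    intro z
    rw [hqk]
    simp [polyEval]
  simp only [hmul] at hdes
  rw [hk.repr _ (hk.mem y), hdiag] at hdes
  have hterm : ∀ i, K ^ 2 / 4 * (Metric.ball (x i) (1 / (2 * M))).indicator (1 : Sph d → ℝ) y ≤
      k y (x i) * k y (x i) := by
    intro i
    by_cases hy : y ∈ Metric.ball (x i) (1 / (2 * (M : ℝ)))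
    · have h2 : dist y (x i) < 1 / (2 * M) := hy
      rw [lt_div_iff₀ (by positivity)] at h2
      have h3 := kernel_lower hd hμ hE hinv hk (x := y) (y := x i) <| by
        have : (L : ℝ) ≤ M := by exact_mod_cast hLM
        nlinarith [dist_nonneg (x := y) (y := x i)]
      rw [hdiag] at h3
      rw [Set.indicator_of_mem hy]
      simp only [Pi.one_apply]
      nlinarith
    · rw [Set.indicator_of_notMem hy]
      simpa using mul_self_nonneg _
  have hsum := Finset.sum_le_sum fun i (_ : i ∈ Finset.univ) => hterm i
  rw [← Finset.mul_sum] at hsum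
  have hsum' : K ^ 2 / 4 * ((∑ i, (Metric.ball (x i) (1 / (2 * M))).indicator (1 : Sph d → ℝ) y) / n)
      ≤ K := by
    refine le_trans ?_ hdes.le
    rw [← mul_div_assoc]
    exact div_le_div_of_nonneg_right hsum (Nat.cast_nonneg n)
  have hS : 0 ≤ (∑ i, (Metric.ball (x i) (1 / (2 * M))).indicator (1 : Sph d → ℝ) y) / n :=
    div_nonneg (Finset.sum_nonneg fun i _ => Set.indicator_nonneg (fun _ _ => zero_le_one) _)
      (Nat.cast_nonneg n)
  refine (mul_le_mul_of_nonneg_right hKL hS).trans ?_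
  refine le_of_mul_le_mul_left ?_ hK0
  nlinarith

/-! ### Means over small balls -/

/-- The kernel functions `k z` span `E`. -/
theorem IsKernel.span_top {d : ℕ} {μ : Measure (Sph d)} (hμ : IsUniform μ)
    {E : Submodule ℝ (Sph d → ℝ)} [FiniteDimensional ℝ E] (hE : ∀ f ∈ E, Continuous f)
    {k : Sph d → Sph d → ℝ} (hk : IsKernel μ E k) :
    Submodule.span ℝ (Set.range fun z => (⟨k z, hk.mem z⟩ : E)) = ⊤ := by
  have := hμ.1
  -- the span has the same reproducing kernel as `E`, hence equals `E`
  set S := Submodule.span ℝ (Set.range fun z => (⟨k z, hk.mem z⟩ : E)) with hS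
  have hWE : S.map E.subtype ≤ E := Submodule.map_subtype_le E S
  obtain ⟨l, hl, -⟩ := exists_kernel hμ (S.map E.subtype) fun f hf => hE f (hWE hf)
  have hkW : ∀ z, k z ∈ S.map E.subtype := fun z =>
    ⟨⟨k z, hk.mem z⟩, Submodule.subset_span ⟨z, rfl⟩, rfl⟩
  have hkl : ∀ z y, k z y = l z y := by
    intro z y
    rw [← hl.repr _ (hkW z) y, hl.symm z y, ← hk.repr _ (hWE (hl.mem y)) z]
    exact integral_congr_ae (.of_forall fun w => mul_comm _ _)
  obtain ⟨r, e, he, hle⟩ := hl.sum_sq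
  refine eq_top_iff.mpr fun p _ => ?_
  have hp : (p : Sph d → ℝ) = ∑ i, (∫ y, e i y * (p : Sph d → ℝ) y ∂μ) • e i := by
    ext z
    rw [← hk.repr _ p.2 z]
    simp only [hkl, hle, Finset.sum_apply, Pi.smul_apply, smul_eq_mul, Finset.sum_mul]
    rw [integral_finsetSum]
    · refine Finset.sum_congr rfl fun i _ => ?_
      simp only [mul_assoc]
      rw [integral_const_mul, mul_comm]
    · intro i _
      simp only [mul_assoc]
      exact (integrable_mul μ (hE _ (hWE (he i))) (hE _ p.2)).const_mul _
  have hp' : (p : Sph d → ℝ) ∈ S.map E.subtype := by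
    rw [hp]
    exact Submodule.sum_mem _ fun i _ => Submodule.smul_mem _ _ (he i)
  obtain ⟨p', hp', h⟩ := hp'
  rwa [← Subtype.ext h]

/-- The mean of `p` over the ball of radius `δ` around `x`, for the chordal distance. It is `0` when
the ball has measure `0`. -/
noncomputable def ballAvg {d : ℕ} (μ : Measure (Sph d)) (δ : ℝ) (p : Sph d → ℝ) (x : Sph d) : ℝ :=
  (μ.real (Metric.ball x δ))⁻¹ * ∫ y in Metric.ball x δ, p y ∂μ

theorem ballAvg_rot {d : ℕ} {μ : Measure (Sph d)} (hμ : IsUniform μ) (δ : ℝ) {p : Sph d → ℝ}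
    (hp : Continuous p)
    (T : EuclideanSpace ℝ (Fin (d+1)) ≃ₗᵢ[ℝ] EuclideanSpace ℝ (Fin (d+1))) (x : Sph d) :
    ballAvg μ δ (fun y => p (sphereRot T y)) x = ballAvg μ δ p (sphereRot T x) := by
  rw [ballAvg, ballAvg, setIntegral_ball_rot hμ T x δ hp, measureReal_def, measureReal_def,
    measure_ball_eq hμ x (sphereRot T x)]

/-- `ballAvg` as a linear map on a space of continuous functions. -/
noncomputable def ballAvgLin {d : ℕ} (μ : Measure (Sph d)) [IsFiniteMeasure μ] (δ : ℝ)
    (E : Submodule ℝ (Sph d → ℝ)) (hE : ∀ f ∈ E, Continuous f) : E →ₗ[ℝ] (Sph d → ℝ) where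
  toFun p := ballAvg μ δ p
  map_add' p q := by
    ext x
    simp only [ballAvg, Submodule.coe_add, Pi.add_apply]
    rw [integral_add (integrable_of_cont μ (hE _ p.2)).integrableOn
      (integrable_of_cont μ (hE _ q.2)).integrableOn, mul_add]
  map_smul' c p := by
    ext x
    simp only [ballAvg, Submodule.coe_smul, Pi.smul_apply, smul_eq_mul, RingHom.id_apply]
    rw [integral_const_mul, mul_left_comm]

/-- An isometry exchanging `x` and `z` shows that `ballAvg` acts symmetrically on kernels. -/
theorem ballAvg_kernel_symm {d : ℕ} {μ : Measure (Sph d)} (hμ : IsUniform μ) (δ : ℝ)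
    {E : Submodule ℝ (Sph d → ℝ)} (hE : ∀ f ∈ E, Continuous f)
    (hinv : ∀ f ∈ E, ∀ T, (fun x => f (sphereRot T x)) ∈ E)
    {k : Sph d → Sph d → ℝ} (hk : IsKernel μ E k) (x z : Sph d) :
    ballAvg μ δ (k z) x = ballAvg μ δ (k x) z := by
  obtain ⟨T, hT, hT'⟩ := exists_rot_pair (dist_comm x z)
  calc ballAvg μ δ (k z) x = ballAvg μ δ (k (sphereRot T x)) (sphereRot T z) := by rw [hT, hT']
    _ = ballAvg μ δ (fun y => k (sphereRot T x) (sphereRot T y)) z :=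
        (ballAvg_rot hμ δ (hE _ (hk.mem _)) T z).symm
    _ = ballAvg μ δ (k x) z := by simp only [hk.rot hμ hE hinv T]

/-- With `k = ∑ i, e i ⊗ e i`, the symmetry of `ballAvg` on kernels writes the mean of `k z` as a
combination of the `e i`. -/
theorem ballAvg_mem {d : ℕ} {μ : Measure (Sph d)} (hμ : IsUniform μ) [IsFiniteMeasure μ] (δ : ℝ)
    {E : Submodule ℝ (Sph d → ℝ)} [FiniteDimensional ℝ E] (hE : ∀ f ∈ E, Continuous f)
    (hinv : ∀ f ∈ E, ∀ T, (fun x => f (sphereRot T x)) ∈ E) (p : E) :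
    ballAvgLin μ δ E hE p ∈ E := by
  obtain ⟨k, hk, -⟩ := exists_kernel hμ E hE
  obtain ⟨r, e, he, hke⟩ := hk.sum_sq
  suffices h : (⊤ : Submodule ℝ E) ≤ E.comap (ballAvgLin μ δ E hE) from h Submodule.mem_top
  rw [← hk.span_top hμ hE, Submodule.span_le]
  rintro _ ⟨z, rfl⟩
  have h1 : ballAvgLin μ δ E hE ⟨k z, hk.mem z⟩ =
      ∑ i, ballAvgLin μ δ E hE ⟨e i, he i⟩ z • e i := by
    ext x
    have h2 : (⟨k x, hk.mem x⟩ : E) = ∑ i, e i x • (⟨e i, he i⟩ : E) := by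
      ext y
      simp [hke]
    calc ballAvg μ δ (k z) x = ballAvgLin μ δ E hE ⟨k x, hk.mem x⟩ z :=
          ballAvg_kernel_symm hμ δ hE hinv hk x z
      _ = _ := by
          rw [h2, map_sum]
          simp only [map_smul, Finset.sum_apply, Pi.smul_apply, smul_eq_mul, mul_comm]
  change ballAvgLin μ δ E hE ⟨k z, hk.mem z⟩ ∈ E
  rw [h1]
  exact Submodule.sum_mem _ fun i _ => Submodule.smul_mem _ _ (he i)

/-- Every `p ∈ 𝒫_M^d` is the ball mean, at radius `1 / (2M)`, of some `q ∈ 𝒫_M^d` of comparable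
`L²` norm. The ball mean is self-adjoint on `𝒫_M^d`; its eigenspaces are rotation invariant, and
evaluating at the centre of the ball the mean of the reproducing kernel of an eigenspace shows that
the eigenvalue is at least `1 / 2`. -/
theorem exists_ballAvg_preimage {d M : ℕ} (hd : 1 ≤ d) (hM : 1 ≤ M) {μ : Measure (Sph d)}
    (hμ : IsUniform μ) {p : Sph d → ℝ} (hp : InPoly d M p) :
    ∃ q, InPoly d M q ∧ ballAvg μ (1 / (2 * M)) q = p ∧
      ∫ y, q y * q y ∂μ ≤ 4 * ∫ y, p y * p y ∂μ := by
  have := hμ.1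
  have hM0 : (1 : ℝ) ≤ M := by exact_mod_cast hM
  set δ : ℝ := 1 / (2 * M) with hδ
  have hδ0 : 0 < δ := by positivity
  have hδ1 : δ ≤ 1 := by
    rw [hδ, div_le_one (by positivity)]
    linarith
  set E := polySpace d M with hEdef
  have hEP : ∀ f ∈ E, InPoly d M f := fun f hf => mem_polySpace.mp hf
  have hE : ∀ f ∈ E, Continuous f := fun f hf => (hEP f hf).continuous
  have hinv : ∀ f ∈ E, ∀ T, (fun x => f (sphereRot T x)) ∈ E :=
    fun f hf T => mem_polySpace.mpr ((hEP f hf).rot T)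
  let A : E →ₗ[ℝ] E := (ballAvgLin μ δ E hE).codRestrict E (ballAvg_mem hμ δ hE hinv)
  have hAc : ∀ v : E, ((A v : E) : Sph d → ℝ) = ballAvg μ δ v := fun v => rfl
  obtain ⟨k, hk, -⟩ := exists_kernel hμ E hE
  let B := l2Form μ E hE
  have hBk : ∀ z (v : E), B ⟨k z, hk.mem z⟩ v = (v : Sph d → ℝ) z := fun z v => hk.repr _ v.2 z
  have hA : ∀ v w, B (A v) w = B v (A w) := by
    have hL : B.comp A = B.compl₂ A := by
      refine LinearMap.ext_on (hk.span_top hμ hE) ?_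
      rintro _ ⟨z, rfl⟩
      refine LinearMap.ext_on (hk.span_top hμ hE) ?_
      rintro _ ⟨w, rfl⟩
      change B (A ⟨k z, hk.mem z⟩) ⟨k w, hk.mem w⟩ = B ⟨k z, hk.mem z⟩ (A ⟨k w, hk.mem w⟩)
      rw [l2Form_symm, hBk, hBk]
      exact ballAvg_kernel_symm hμ δ hE hinv hk w z
    intro v w
    exact LinearMap.congr_fun (LinearMap.congr_fun hL v) w
  have hev : ∀ (r : ℝ) (v : E), v ≠ 0 → A v = r • v → 1 / 2 ≤ r := by
    intro r v hv hAv
    -- the eigenspace, as a space of functions on the sphere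
    let F := (Module.End.eigenspace A r).map E.subtype
    have hF : ∀ f, f ∈ F ↔ f ∈ E ∧ ballAvg μ δ f = r • f := by
      intro f
      constructor
      · rintro ⟨w, hw, rfl⟩
        refine ⟨w.2, ?_⟩
        have := congrArg (Subtype.val) (Module.End.mem_eigenspace_iff.mp hw)
        exact this
      · rintro ⟨hf, h⟩
        exact ⟨⟨f, hf⟩, Module.End.mem_eigenspace_iff.mpr (Subtype.ext h), rfl⟩
    have hFP : ∀ f ∈ F, InPoly d M f := fun f hf => hEP f ((hF f).mp hf).1
    have hFinv : ∀ f ∈ F, ∀ T, (fun x => f (sphereRot T x)) ∈ F := by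
      intro f hf T
      rw [hF] at hf ⊢
      refine ⟨hinv f hf.1 T, ?_⟩
      ext x
      rw [ballAvg_rot hμ δ (hE f hf.1), hf.2]
      rfl
    obtain ⟨l, hl, hlint⟩ := exists_kernel hμ F fun f hf => (hFP f hf).continuous
    have hrot := hl.rot hμ (fun f hf => (hFP f hf).continuous) hFinv
    obtain ⟨x⟩ : Nonempty (Sph d) := by
      by_contra h
      rw [not_nonempty_iff] at h
      exact hv (Subtype.ext (funext fun x => h.elim x))
    have hlx : ∀ w, l w w = l x x := by
      intro w
      obtain ⟨T, rfl⟩ := exists_rot x w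
      exact hrot T x x
    have hlpos : 0 < l x x := by
      simp only [hlx, integral_const, probReal_univ, one_smul] at hlint
      rw [hlint, Nat.cast_pos]
      have : Nontrivial F := by
        refine ⟨⟨⟨v, (hF v).mpr ⟨v.2, congrArg Subtype.val hAv⟩⟩, 0, fun h => hv ?_⟩⟩
        exact Subtype.ext (congrArg (fun u : F => (u : Sph d → ℝ)) h)
      exact Module.finrank_pos
    have hm : 0 < μ.real (Metric.ball x δ) := uniform_ball_pos hμ x hδ0 hδ1
    have h1 : l x x / 2 * μ.real (Metric.ball x δ) ≤ ∫ y in Metric.ball x δ, l x y ∂μ := by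
      refine setIntegral_ge_of_const_le_real measurableSet_ball (measure_ne_top _ _) ?_
        (integrable_of_cont μ (hFP _ (hl.mem x)).continuous).integrableOn
      intro y hy
      refine kernel_lower hd hμ hFP hFinv hl ?_
      have h2 : dist y x < 1 / (2 * M) := hy
      rw [lt_div_iff₀ (by positivity), dist_comm] at h2
      linarith
    have h2 : ballAvg μ δ (l x) x = r * l x x := congrFun ((hF _).mp (hl.mem x)).2 x
    rw [ballAvg, inv_mul_eq_iff_eq_mul₀ hm.ne'] at h2
    rw [h2] at h1
    have h3 : 1 / 2 * (l x x * μ.real (Metric.ball x δ)) ≤ r * (l x x * μ.real (Metric.ball x δ)) := by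
      linarith
    exact le_of_mul_le_mul_right h3 (by positivity)
  obtain ⟨q, hq, hqp⟩ := exists_preimage_of_eigenvalues B (l2Form_symm μ E hE)
    (l2Form_nonneg μ E hE) (l2Form_definite hμ E hE) A hA (by norm_num) hev
    ⟨p, mem_polySpace.mpr hp⟩
  refine ⟨q, hEP _ q.2, congrArg Subtype.val hq, ?_⟩
  have : (1 / 2 : ℝ) ^ 2 * ∫ y, (q : Sph d → ℝ) y * (q : Sph d → ℝ) y ∂μ ≤ ∫ y, p y * p y ∂μ := hqp
  linarith

/-! ### Sampling inequality and dyadic decomposition -/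

/-- The Cauchy–Schwarz inequality on a ball. -/
theorem ballAvg_sq_le {d : ℕ} {μ : Measure (Sph d)} [IsFiniteMeasure μ] {δ : ℝ} {q : Sph d → ℝ}
    (hq : Continuous q) (x : Sph d) (hm : 0 < μ.real (Metric.ball x δ)) :
    μ.real (Metric.ball x δ) * ballAvg μ δ q x ^ 2 ≤ ∫ y in Metric.ball x δ, q y ^ 2 ∂μ := by
  set a := ballAvg μ δ q x with ha
  have h1 : ∫ y in Metric.ball x δ, q y ∂μ = μ.real (Metric.ball x δ) * a := by
    rw [ha, ballAvg, mul_inv_cancel_left₀ hm.ne']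
  have h2 : 0 ≤ ∫ y in Metric.ball x δ, (q y - a) ^ 2 ∂μ := integral_nonneg fun _ => sq_nonneg _
  have h3 : ∀ y, (q y - a) ^ 2 = q y ^ 2 - 2 * a * q y + a ^ 2 := fun y => by ring
  have i1 : IntegrableOn (fun y => q y ^ 2) (Metric.ball x δ) μ :=
    (integrable_of_cont μ (hq.pow 2)).integrableOn
  have i2 : IntegrableOn (fun y => 2 * a * q y) (Metric.ball x δ) μ :=
    ((integrable_of_cont μ hq).const_mul _).integrableOn
  have i12 : IntegrableOn (fun y => q y ^ 2 - 2 * a * q y) (Metric.ball x δ) μ := i1.sub i2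
  simp only [h3] at h2
  rw [integral_add i12 (integrable_const _), integral_sub i1 i2, integral_const_mul, h1,
    setIntegral_const, smul_eq_mul] at h2
  linarith

/-- The Marcinkiewicz–Zygmund inequality: the quadratic mean over a spherical `2L`-design of a
polynomial of degree at most `M`, where `M ≥ L`, exceeds its `L²` norm by at most a factor of order
`(M / L) ^ (d / 2)`. -/
theorem marcinkiewicz_zygmund {d : ℕ} (hd : 1 ≤ d) {μ : Measure (Sph d)} (hμ : IsUniform μ)
    {L M : ℕ} (hL : 1 ≤ L) (hLM : L ≤ M) {n : ℕ} (x : Fin n → Sph d) {t : ℕ}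
    (ht : 2 * L ≤ t) (hx : IsDesign μ x t) {p : Sph d → ℝ} (hp : InPoly d M p) :
    (L : ℝ) ^ d * ((∑ i, p (x i) ^ 2) / n) ≤
      (16 * (2 * (d + 1) * 2 ^ d) * (4 * d) ^ d) * (M : ℝ) ^ d * ∫ y, p y ^ 2 ∂μ := by
  have := hμ.1
  have hM0 : (1 : ℝ) ≤ M := by exact_mod_cast hL.trans hLM
  have hd0 : (0 : ℝ) < d := by exact_mod_cast hd
  obtain ⟨q, hq, hqp, hqi⟩ := exists_ballAvg_preimage hd (hL.trans hLM) hμ hp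
  have hqc := hq.continuous
  set δ : ℝ := 1 / (2 * M) with hδ
  rcases isEmpty_or_nonempty (Sph d) with hemp | ⟨⟨x₀⟩⟩
  · have : n = 0 := by
      by_contra h
      exact hemp.elim (x ⟨0, Nat.pos_of_ne_zero h⟩)
    subst this
    simp only [Finset.univ_eq_empty, Finset.sum_empty, zero_div, mul_zero]
    have : 0 ≤ ∫ y, p y ^ 2 ∂μ := integral_nonneg fun _ => sq_nonneg _
    positivity
  set m := μ.real (Metric.ball x₀ δ) with hm
  have hmx : ∀ z, μ.real (Metric.ball z δ) = m := fun z => by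
    rw [hm, measureReal_def, measureReal_def, measure_ball_eq hμ x₀ z]
  have hmlow : (1 / (4 * M : ℝ)) ^ d ≤ (2 * (d + 1) * 2 ^ d) * m := by
    have h1 := measure_ball_lower hμ x₀ (δ := 1 / (4 * M)) (by positivity) (by
      rw [div_le_div_iff₀ (by positivity) (by positivity)]
      linarith)
    have h2 : 2 * (1 / (4 * M : ℝ)) = δ := by
      rw [hδ]
      field_simp
      norm_num
    rwa [h2] at h1
  have hm0 : 0 < m := pos_of_mul_pos_right (lt_of_lt_of_le (by positivity) hmlow) (by positivity)
  have h1 : ∀ i, m * p (x i) ^ 2 ≤ ∫ y, (Metric.ball (x i) δ).indicator 1 y * q y ^ 2 ∂μ := by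
    intro i
    have h2 := ballAvg_sq_le (δ := δ) hqc (x i) (by rw [hmx]; exact hm0)
    rw [hqp, hmx, ← integral_indicator measurableSet_ball] at h2
    refine h2.trans (le_of_eq (integral_congr_ae (.of_forall fun y => ?_)))
    by_cases hy : y ∈ Metric.ball (x i) δ <;> simp [hy]
  have hint : ∀ i, Integrable (fun y => (Metric.ball (x i) δ).indicator 1 y * q y ^ 2) μ := by
    intro i
    refine ((integrable_of_cont μ (hqc.pow 2)).indicator
      (measurableSet_ball (x := x i) (ε := δ))).congr (.of_forall fun y => ?_)
    by_cases hy : y ∈ Metric.ball (x i) δ <;> simp [hy]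
  have h2 : ((L : ℝ) / d) ^ d * (m * ((∑ i, p (x i) ^ 2) / n)) ≤ 4 * ∫ y, q y ^ 2 ∂μ := by
    calc ((L : ℝ) / d) ^ d * (m * ((∑ i, p (x i) ^ 2) / n))
        = ((L : ℝ) / d) ^ d * ((∑ i, m * p (x i) ^ 2) / n) := by
          rw [← Finset.mul_sum]
          ring
      _ ≤ ((L : ℝ) / d) ^ d *
          ((∑ i, ∫ y, (Metric.ball (x i) δ).indicator 1 y * q y ^ 2 ∂μ) / n) := by
          gcongr with i
          exact h1 i
      _ = ∫ y, ((L : ℝ) / d) ^ d *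
          ((∑ i, (Metric.ball (x i) δ).indicator 1 y * q y ^ 2) / n) ∂μ := by
          rw [integral_const_mul, integral_div, integral_finsetSum _ fun i _ => hint i]
      _ ≤ ∫ y, 4 * q y ^ 2 ∂μ := by
          refine integral_mono
            (((integrable_finsetSum _ fun i _ => hint i).div_const _).const_mul _)
            ((integrable_of_cont μ (hqc.pow 2)).const_mul _) fun y => ?_
          have h3 := design_count hd hμ hL hLM x ht hx y
          rw [← Finset.sum_mul]
          calc _ = ((L : ℝ) / d) ^ d *
              ((∑ i, (Metric.ball (x i) (1 / (2 * M))).indicator 1 y) / n) * q y ^ 2 := by ring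
            _ ≤ _ := mul_le_mul_of_nonneg_right h3 (sq_nonneg _)
      _ = _ := integral_const_mul _ _
  simp only [← sq] at hqi
  set S := (∑ i, p (x i) ^ 2) / (n : ℝ) with hS
  have hS0 : 0 ≤ S := div_nonneg (Finset.sum_nonneg fun i _ => sq_nonneg _) (Nat.cast_nonneg n)
  set I := ∫ y, p y ^ 2 ∂μ with hI
  have h4 : ((L : ℝ) / d) ^ d * (m * S) ≤ 16 * I := by linarith
  rw [div_pow, div_mul_eq_mul_div, div_le_iff₀ (by positivity)] at h4
  rw [div_pow, one_pow, div_le_iff₀ (by positivity)] at hmlow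
  calc (L : ℝ) ^ d * S = (L : ℝ) ^ d * S * 1 := (mul_one _).symm
    _ ≤ (L : ℝ) ^ d * S * ((2 * (d + 1) * 2 ^ d) * m * (4 * M) ^ d) := by gcongr
    _ = ((2 * (d + 1) * 2 ^ d) * (4 * M) ^ d) * ((L : ℝ) ^ d * (m * S)) := by ring
    _ ≤ ((2 * (d + 1) * 2 ^ d) * (4 * M) ^ d) * (16 * I * d ^ d) := by gcongr
    _ = _ := by rw [mul_pow, mul_pow]; ring

/-- The quadratic mean of `g` over the nodes `x`. -/
noncomputable def nodeNorm {d n : ℕ} (x : Fin n → Sph d) (g : Sph d → ℝ) : ℝ :=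
  Real.sqrt ((∑ i, g (x i) ^ 2) / n)

theorem nodeNorm_add_le {d n : ℕ} (x : Fin n → Sph d) (g h : Sph d → ℝ) :
    nodeNorm x (fun y => g y + h y) ≤ nodeNorm x g + nodeNorm x h := by
  have key : ∀ g : Sph d → ℝ, nodeNorm x g =
      ‖(WithLp.toLp 2 (fun i => g (x i)) : EuclideanSpace ℝ (Fin n))‖ / Real.sqrt n := by
    intro g
    rw [nodeNorm, EuclideanSpace.norm_eq, Real.sqrt_div (Finset.sum_nonneg fun i _ => sq_nonneg _)]
    simp
  rw [key, key, key, ← add_div]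
  gcongr
  exact norm_add_le (WithLp.toLp 2 (fun i => g (x i)) : EuclideanSpace ℝ (Fin n))
    (WithLp.toLp 2 (fun i => h (x i)))

theorem nodeNorm_le_of_abs_le {d n : ℕ} (x : Fin n → Sph d) (g : Sph d → ℝ) {ε : ℝ} (hε : 0 ≤ ε)
    (h : ∀ y, |g y| ≤ ε) : nodeNorm x g ≤ ε := by
  refine Real.sqrt_le_left hε |>.mpr ?_
  refine div_le_of_le_mul₀ (Nat.cast_nonneg n) (sq_nonneg _) ?_
  calc ∑ i, g (x i) ^ 2 ≤ ∑ _i : Fin n, ε ^ 2 :=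
        Finset.sum_le_sum fun i _ => sq_le_sq' (abs_le.mp (h _)).1 (abs_le.mp (h _)).2
    _ = ε ^ 2 * n := by simp [mul_comm]

theorem nodeNorm_telescope {d n : ℕ} (x : Fin n → Sph d) (P : ℕ → Sph d → ℝ) (J : ℕ) :
    nodeNorm x (fun y => P J y - P 0 y) ≤
      ∑ j ∈ Finset.range J, nodeNorm x (fun y => P (j + 1) y - P j y) := by
  induction J with
  | zero => simp [nodeNorm]
  | succ J ih =>
    rw [Finset.sum_range_succ]
    have h := nodeNorm_add_le x (fun y => P J y - P 0 y) (fun y => P (J + 1) y - P J y)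
    have e : (fun y => P J y - P 0 y + (P (J + 1) y - P J y)) = fun y => P (J + 1) y - P 0 y := by
      ext y
      ring
    rw [e] at h
    linarith

theorem integral_sub_sq_le {d : ℕ} {μ : Measure (Sph d)} [IsFiniteMeasure μ] {f g h : Sph d → ℝ}
    (hf : Continuous f) (hg : Continuous g) (hh : Continuous h) {a b : ℝ}
    (ha : Real.sqrt (∫ y, (f y - g y) ^ 2 ∂μ) ≤ a) (hb : Real.sqrt (∫ y, (f y - h y) ^ 2 ∂μ) ≤ b)
    (hba : b ≤ a) : ∫ y, (h y - g y) ^ 2 ∂μ ≤ 4 * a ^ 2 := by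
  have ha0 := (Real.sqrt_nonneg _).trans ha
  have hb0 := (Real.sqrt_nonneg _).trans hb
  have h1 := (Real.sqrt_le_left ha0).mp ha
  have h2 := (Real.sqrt_le_left hb0).mp hb
  have h3 : b ^ 2 ≤ a ^ 2 := by gcongr
  have i1 : Integrable (fun y => 2 * (f y - g y) ^ 2) μ :=
    (integrable_of_cont μ ((hf.sub hg).pow 2)).const_mul 2
  have i2 : Integrable (fun y => 2 * (f y - h y) ^ 2) μ :=
    (integrable_of_cont μ ((hf.sub hh).pow 2)).const_mul 2
  calc ∫ y, (h y - g y) ^ 2 ∂μ ≤ ∫ y, (2 * (f y - g y) ^ 2 + 2 * (f y - h y) ^ 2) ∂μ := by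
        refine integral_mono (integrable_of_cont μ ((hh.sub hg).pow 2)) (i1.add i2) fun y => ?_
        dsimp only
        nlinarith [sq_nonneg (f y - g y + (f y - h y))]
    _ = 2 * ∫ y, (f y - g y) ^ 2 ∂μ + 2 * ∫ y, (f y - h y) ^ 2 ∂μ := by
        rw [integral_add i1 i2, integral_const_mul, integral_const_mul]
    _ ≤ _ := by linarith

theorem stmt_8 (d : ℕ) (hd : 1 ≤ d) (s : ℝ) (hs : (d : ℝ) / 2 < s) :
    ∃ C : ℝ, 0 < C ∧
      ∀ (μ : MeasureTheory.Measure (Sph d)), IsUniform μ →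
      ∀ (L : ℕ), 1 ≤ L → ∀ R : ℝ, 0 < R →
      ∀ (n : ℕ), 0 < n → ∀ (x : Fin n → Sph d) (t : ℕ), 2 * L ≤ t →
      IsDesign μ x t →
      ∀ f : Sph d → ℝ, Continuous f →
      -- `Pf L'` is the continuous representative of the L²(μ)-orthogonal
      -- projection of `f` onto `𝒫_{L'}^d`:
      ∀ Pf : ℕ → Sph d → ℝ,
        (∀ L' : ℕ, InPoly d L' (Pf L') ∧
          ∀ g : Sph d → ℝ, InPoly d L' g →
            ∫ y, (f y - Pf L' y) * g y ∂μ = 0) →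
        -- (i) uniform convergence of `Π_{2^j L} f` to `f`
        TendstoUniformly (fun j : ℕ => Pf (2 ^ j * L)) f Filter.atTop →
        -- (ii) the L² approximation bound
        (∀ j : ℕ, Real.sqrt (∫ y, (f y - Pf (2 ^ j * L) y) ^ 2 ∂μ)
          ≤ R * ((2 ^ j * L : ℕ) : ℝ) ^ (-s)) →
        Real.sqrt ((∑ i, (f (x i) - Pf L (x i)) ^ 2) / n)
          ≤ C * (L : ℝ) ^ (-s) * R := by
  have hd0 : (0 : ℝ) < d := by exact_mod_cast hd
  let C₁ : ℝ := 16 * (2 * (d + 1) * 2 ^ d) * (4 * d) ^ d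
  have hC₁ : 0 < C₁ := by positivity
  let K : ℝ := Real.sqrt (4 * C₁ * 2 ^ d)
  have hK : 0 < K := Real.sqrt_pos.mpr (by positivity)
  let ρ : ℝ := 2 ^ ((d : ℝ) / 2 - s)
  have hρ0 : 0 < ρ := by positivity
  have hρ1 : ρ < 1 := Real.rpow_lt_one_of_one_lt_of_neg one_lt_two (by linarith)
  refine ⟨K / (1 - ρ), div_pos hK (by linarith), ?_⟩
  intro μ hμ L hL R hR n hn x t ht hx f hf Pf hPf hlim happ
  have := hμ.1
  have hL0 : (0 : ℝ) < L := by exact_mod_cast hL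
  have hPc : ∀ j, Continuous (Pf j) := fun j => (hPf j).1.continuous
  have hLs : 0 < (L : ℝ) ^ (-s) := Real.rpow_pos_of_pos hL0 _
  -- the dyadic blocks, bounded by the Marcinkiewicz–Zygmund inequality
  have hblock : ∀ j, nodeNorm x (fun y => Pf (2 ^ (j + 1) * L) y - Pf (2 ^ j * L) y) ≤
      K * R * (L : ℝ) ^ (-s) * ρ ^ j := by
    intro j
    have hp : InPoly d (2 ^ (j + 1) * L)
        (fun y => Pf (2 ^ (j + 1) * L) y - Pf (2 ^ j * L) y) := by
      refine mem_polySpace.mp (Submodule.sub_mem _ (mem_polySpace.mpr (hPf _).1) ?_)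
      obtain ⟨q, hq, hfq⟩ := (hPf (2 ^ j * L)).1
      exact mem_polySpace.mpr ⟨q, hq.trans (by gcongr <;> omega), hfq⟩
    have hMZ := marcinkiewicz_zygmund hd hμ hL
      (Nat.le_mul_of_pos_left L (by positivity : 0 < 2 ^ (j + 1))) x ht hx hp
    have hpow : ((2 ^ (j + 1) * L : ℕ) : ℝ) ^ (-s) ≤ ((2 ^ j * L : ℕ) : ℝ) ^ (-s) := by
      refine Real.rpow_le_rpow_of_nonpos (by positivity) ?_ (by linarith)
      exact_mod_cast Nat.mul_le_mul_right L (Nat.pow_le_pow_right two_pos (Nat.le_succ j))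
    have hI := integral_sub_sq_le hf (hPc _) (hPc _) (happ j) (happ (j + 1))
      (mul_le_mul_of_nonneg_left hpow hR.le)
    have hsplit : ((2 ^ j * L : ℕ) : ℝ) ^ (-s) = ((2 : ℝ) ^ (-s)) ^ j * (L : ℝ) ^ (-s) := by
      push_cast
      rw [Real.mul_rpow (by positivity) hL0.le, ← Real.rpow_natCast, ← Real.rpow_natCast,
        ← Real.rpow_mul two_pos.le, ← Real.rpow_mul two_pos.le, mul_comm (-s)]
    have hρ2 : ρ ^ 2 = 2 ^ d * ((2 : ℝ) ^ (-s)) ^ 2 := by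
      rw [← Real.rpow_natCast, ← Real.rpow_natCast, ← Real.rpow_natCast,
        ← Real.rpow_mul two_pos.le, ← Real.rpow_mul two_pos.le, ← Real.rpow_add two_pos]
      congr 1
      push_cast
      ring
    rw [hsplit] at hI
    have hfin : (L : ℝ) ^ d * ((∑ i, (Pf (2 ^ (j + 1) * L) (x i) - Pf (2 ^ j * L) (x i)) ^ 2) / n)
        ≤ (L : ℝ) ^ d * (K * R * (L : ℝ) ^ (-s) * ρ ^ j) ^ 2 := by
      refine hMZ.trans ?_
      refine (mul_le_mul_of_nonneg_left hI (by positivity)).trans (le_of_eq ?_)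
      have hK2 : K ^ 2 = 4 * C₁ * 2 ^ d := Real.sq_sqrt (by positivity)
      have e1 : (K * R * (L : ℝ) ^ (-s) * ρ ^ j) ^ 2 =
          K ^ 2 * (R * (L : ℝ) ^ (-s)) ^ 2 * (ρ ^ 2) ^ j := by ring
      rw [e1, hK2, hρ2]
      push_cast
      simp only [C₁, mul_pow]
      ring
    have hfin' := le_of_mul_le_mul_left hfin (by positivity)
    exact (Real.sqrt_le_left (by positivity)).mpr hfin'
  have hgeom : ∀ J, ∑ j ∈ Finset.range J, ρ ^ j ≤ (1 - ρ)⁻¹ := fun J =>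
    (summable_geometric_of_lt_one hρ0.le hρ1).sum_le_tsum _ (fun j _ => by positivity) |>.trans_eq
      (tsum_geometric_of_lt_one hρ0.le hρ1)
  change nodeNorm x (fun y => f y - Pf L y) ≤ _
  refine le_of_forall_pos_le_add fun ε hε => ?_
  obtain ⟨J, hJ⟩ := (Metric.tendstoUniformly_iff.mp hlim ε hε).exists
  have h1 := nodeNorm_le_of_abs_le x (fun y => f y - Pf (2 ^ J * L) y) hε.le
    fun y => (hJ y).le
  have h2 := nodeNorm_telescope x (fun j => Pf (2 ^ j * L)) J
  have h3 := h2.trans (Finset.sum_le_sum fun j _ => hblock j)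
  rw [← Finset.mul_sum] at h3
  have h4 := nodeNorm_add_le x (fun y => Pf (2 ^ J * L) y - Pf (2 ^ 0 * L) y)
    (fun y => f y - Pf (2 ^ J * L) y)
  have e : (fun y => Pf (2 ^ J * L) y - Pf (2 ^ 0 * L) y + (f y - Pf (2 ^ J * L) y)) =
      fun y => f y - Pf L y := by
    ext y
    rw [pow_zero, one_mul]
    ring
  rw [e] at h4
  have h5 : K * R * (L : ℝ) ^ (-s) * ∑ j ∈ Finset.range J, ρ ^ j ≤
      K * R * (L : ℝ) ^ (-s) * (1 - ρ)⁻¹ :=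
    mul_le_mul_of_nonneg_left (hgeom J) (by positivity)
  calc _ ≤ K * R * (L : ℝ) ^ (-s) * (1 - ρ)⁻¹ + ε := by linarith
    _ = _ := by ring
end
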